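/- arXiv:1301.3798 — 9 statements merged into one kernel-verified Lean document; each statement's English description precedes it below -/
import Mathlib

section
/- Let m ∈ ℝ and let μ, ν ∈ M¹_m. Then the following three conditions are equivalent: (1) μ ≤_cx ν; (2) for every x ∈ ℝ, ∫_ℝ (y−x)⁺ dμ(y) ≤ ∫_ℝ (y−x)⁺ dν(y); (3) for every x ∈ ℝ, u_μ(x) ≥ u_ν(x). -/
/-!
Hinge functions `y ↦ (y - x)⁺` are convex, and `|x - y| = 2 (y - x)⁺ - (y - x)`, so for equal means
the hinge inequalities and the potential inequalities are the same, and the convex order implies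
both.

The content is that the hinge inequalities imply the convex order. A convex `f : ℝ → ℝ` is
continuous, hence the supremum of countably many
affine functions (`ConvexOn.univ_sSup_of_nat_affine_eq`), i.e. the increasing pointwise limit of
maxima of finitely many of them. Such a finite maximum is an affine function plus a nonnegative
combination of hinges (`exists_hingeSum`), so the hinge inequalities and equality of means give
the inequality for it (`HingeSum.integral_le`), and monotone convergence passes it to `f`.
-/

open MeasureTheory

/-- The potential function of a measure: `u_μ(x) = -∫ |x - y| dμ(y)`. -/
noncomputable def potential (μ : Measure ℝ) (x : ℝ) : ℝ := -∫ y, |x - y| ∂μ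

/-- Increasing convex order: `∫ f dμ ≤ ∫ f dν` for every convex `f` integrable wrt both. -/
def ConvexOrder (μ ν : Measure ℝ) : Prop :=
  ∀ f : ℝ → ℝ, ConvexOn ℝ Set.univ f → Integrable f μ → Integrable f ν →
    ∫ x, f x ∂μ ≤ ∫ x, f x ∂ν

open Filter Topology

/-- Functions of the form: affine plus a finite nonnegative combination of hinges
`x ↦ max (x - t) 0`. -/
inductive HingeSum : (ℝ → ℝ) → Prop
  | affine (a b : ℝ) : HingeSum (fun x => a * x + b)
  | add_hinge (g : ℝ → ℝ) (c t : ℝ) (hc : 0 ≤ c) (hg : HingeSum g) :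
      HingeSum (fun x => g x + c * max (x - t) 0)

lemma integrable_hinge {μ : Measure ℝ} [IsProbabilityMeasure μ] (hμ : Integrable id μ) (t : ℝ) :
    Integrable (fun y => max (y - t) 0) μ :=
  (hμ.sub (integrable_const t)).pos_part

lemma HingeSum.integrable {μ : Measure ℝ} [IsProbabilityMeasure μ] (hμ : Integrable id μ)
    {g : ℝ → ℝ} (hg : HingeSum g) : Integrable g μ := by
  induction hg with
  | affine a b => exact (hμ.const_mul a).add (integrable_const b)
  | add_hinge g c t hc hg ih => exact ih.add ((integrable_hinge hμ t).const_mul c)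

lemma HingeSum.integral_le {μ ν : Measure ℝ} [IsProbabilityMeasure μ] [IsProbabilityMeasure ν]
    (hμ : Integrable id μ) (hν : Integrable id ν) (hm : ∫ x, x ∂μ = ∫ x, x ∂ν)
    (h : ∀ x : ℝ, ∫ y, max (y - x) 0 ∂μ ≤ ∫ y, max (y - x) 0 ∂ν)
    {g : ℝ → ℝ} (hg : HingeSum g) : ∫ x, g x ∂μ ≤ ∫ x, g x ∂ν := by
  induction hg with
  | affine a b =>
    have key (ρ : Measure ℝ) [IsProbabilityMeasure ρ] (hρ : Integrable (fun x : ℝ => x) ρ) :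
        ∫ x, (a * x + b) ∂ρ = a * ∫ x, x ∂ρ + b := by
      rw [integral_add (hρ.const_mul a) (integrable_const b), integral_const_mul]
      simp
    rw [key μ hμ, key ν hν, hm]
  | add_hinge g c t hc hg ih =>
    rw [integral_add (hg.integrable hμ) ((integrable_hinge hμ t).const_mul c),
      integral_add (hg.integrable hν) ((integrable_hinge hν t).const_mul c),
      integral_const_mul, integral_const_mul]
    exact add_le_add ih (mul_le_mul_of_nonneg_left (h t) hc)

/-- The maximum of finitely many affine functions `x ↦ p.1 * x + p.2` is a `HingeSum`; the maximum
is expressed by saying that `g` dominates every line and coincides with one of them at each point.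

Let `n` be the steepest line (the highest one in case of ties) and let `t` be the last
point where a less steep line `j` meets `n`. Right
of `t` the maximum is `n`; left of `t` it is the maximum of the lines no steeper than `j`, since
the lines steeper than `j` lie below `j` there. Adding a hinge at `t` to the latter maximum
changes its final slope from that of `j` to that of `n`. -/
lemma exists_hingeSum (S : Finset (ℝ × ℝ)) (hS : S.Nonempty) :
    ∃ g, HingeSum g ∧ (∀ p ∈ S, ∀ x, p.1 * x + p.2 ≤ g x) ∧
      ∀ x, ∃ p ∈ S, g x = p.1 * x + p.2 := by
  induction S using Finset.strongInduction with
  | H S ih =>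
  -- The lexicographic maximum is the highest among the steepest lines.
  obtain ⟨n, hnS, hn⟩ := Finset.exists_max_image S toLex hS
  have hn' : ∀ p ∈ S, p.1 < n.1 ∨ (p.1 = n.1 ∧ p.2 ≤ n.2) := by
    intro p hp
    simpa [Prod.Lex.le_iff] using hn p hp
  rcases (S.filter (fun p => p.1 < n.1)).eq_empty_or_nonempty with hR | hR
  · refine ⟨_, HingeSum.affine n.1 n.2, fun p hp x => ?_, fun x => ⟨n, hnS, rfl⟩⟩
    rcases hn' p hp with h | ⟨h1, h2⟩
    · exact absurd h (Finset.filter_eq_empty_iff.1 hR hp)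
    · rw [h1]; linarith
  obtain ⟨j, hjR, hj⟩ := Finset.exists_max_image _ (fun p => (p.2 - n.2) / (n.1 - p.1)) hR
  obtain ⟨hjS, hjn⟩ := Finset.mem_filter.1 hjR
  set t := (j.2 - n.2) / (n.1 - j.1) with ht
  have htj : j.1 * t + j.2 = n.1 * t + n.2 := by
    have : t * (n.1 - j.1) = j.2 - n.2 := div_mul_cancel₀ _ (by linarith)
    linarith
  -- At `t`, no line exceeds `n`.
  have hpt : ∀ p ∈ S, p.1 * t + p.2 ≤ n.1 * t + n.2 := by
    intro p hp
    rcases hn' p hp with h | ⟨h1, h2⟩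
    · have := hj p (Finset.mem_filter.2 ⟨hp, h⟩)
      have := (div_le_iff₀ (sub_pos.2 h)).1 this
      linarith
    · rw [h1]; linarith
  have hjT : j ∈ S.filter (fun p => p.1 ≤ j.1) := Finset.mem_filter.2 ⟨hjS, le_rfl⟩
  obtain ⟨g, hg, hle, heq⟩ := ih (S.filter (fun p => p.1 ≤ j.1))
    (Finset.filter_ssubset.2 ⟨n, hnS, not_le.2 hjn⟩) ⟨j, hjT⟩
  refine ⟨_, HingeSum.add_hinge g (n.1 - j.1) t (by linarith) hg, fun p hp x => ?_, fun x => ?_⟩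
  · have hgj := hle j hjT x
    have hp1 := hpt p hp
    have hpn : p.1 ≤ n.1 := by
      rcases hn' p hp with h | h
      exacts [h.le, h.1.le]
    rcases le_total x t with hx | hx
    · rw [max_eq_right (by linarith)]
      rcases le_total p.1 j.1 with h | h
      · linarith [hle p (Finset.mem_filter.2 ⟨hp, h⟩) x]
      · nlinarith [mul_nonneg (sub_nonneg.2 h) (sub_nonneg.2 hx)]
    · rw [max_eq_left (by linarith)]
      nlinarith [mul_nonneg (sub_nonneg.2 hpn) (sub_nonneg.2 hx)]
  · obtain ⟨q, hq, hgq⟩ := heq x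
    obtain ⟨hqS, hqj⟩ := Finset.mem_filter.1 hq
    rcases le_total x t with hx | hx
    · exact ⟨q, hqS, by rw [max_eq_right (by linarith), hgq]; ring⟩
    · refine ⟨n, hnS, ?_⟩
      have hgj := hle j hjT x
      have : g x = j.1 * x + j.2 := le_antisymm
        (by nlinarith [hpt q hqS, mul_nonneg (sub_nonneg.2 hqj) (sub_nonneg.2 hx)]) hgj
      rw [max_eq_left (by linarith), this]
      linear_combination htj

lemma convexOrder_of_hinge {μ ν : Measure ℝ} [IsProbabilityMeasure μ] [IsProbabilityMeasure ν]
    (hμ : Integrable id μ) (hν : Integrable id ν) (hm : ∫ x, x ∂μ = ∫ x, x ∂ν)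
    (h : ∀ x : ℝ, ∫ y, max (y - x) 0 ∂μ ≤ ∫ y, max (y - x) 0 ∂ν) : ConvexOrder μ ν := by
  intro f hf hfμ hfν
  have hfc : Continuous f := continuousOn_univ.1 (hf.continuousOn isOpen_univ)
  obtain ⟨l, c, hlc, hsup⟩ :=
    hf.univ_sSup_of_nat_affine_eq (𝕜 := ℝ) hfc.lowerSemicontinuous
  have hl (i : ℕ) (x : ℝ) : l i x = l i 1 * x := by
    rw [mul_comm, ← smul_eq_mul, ← map_smul, smul_eq_mul, mul_one]
  have hlef (i : ℕ) (x : ℝ) : l i 1 * x + c i ≤ f x := by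
    simpa [hl i x] using hlc i x
  have hlub (x : ℝ) : IsLUB (Set.range fun i => l i 1 * x + c i) (f x) := by
    have h1 : f x = ⨆ i, (l i 1 * x + c i) := by
      conv_lhs => rw [← hsup]
      rw [iSup_apply]
      simp [hl _ x]
    rw [h1]
    exact isLUB_ciSup ⟨f x, by rintro _ ⟨i, rfl⟩; exact hlef i x⟩
  choose g hg hle heq using fun n : ℕ =>
    exists_hingeSum ((Finset.range (n + 1)).image fun i => (l i 1, c i)) (by simp)
  have hle' (n i : ℕ) (hi : i ≤ n) (x : ℝ) : l i 1 * x + c i ≤ g n x :=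
    hle n (l i 1, c i) (Finset.mem_image.2 ⟨i, by simpa [Nat.lt_succ_iff] using hi, rfl⟩) x
  have heq' (n : ℕ) (x : ℝ) : ∃ i ≤ n, g n x = l i 1 * x + c i := by
    obtain ⟨p, hp, hpe⟩ := heq n x
    obtain ⟨i, hi, rfl⟩ := Finset.mem_image.1 hp
    exact ⟨i, Nat.lt_succ_iff.1 (Finset.mem_range.1 hi), hpe⟩
  have hmono (x : ℝ) : Monotone fun n => g n x := by
    intro n k hnk
    obtain ⟨i, hi, he⟩ := heq' n x
    simpa only [he] using hle' k i (hi.trans hnk) x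
  have htend (x : ℝ) : Tendsto (fun n => g n x) atTop (𝓝 (f x)) := by
    refine tendsto_atTop_isLUB (hmono x) ⟨?_, fun b hb => (hlub x).2 ?_⟩
    · rintro _ ⟨n, rfl⟩
      obtain ⟨i, -, he⟩ := heq' n x
      simpa only [he] using hlef i x
    · rintro _ ⟨i, rfl⟩
      exact (hle' i i le_rfl x).trans (hb ⟨i, rfl⟩)
  exact le_of_tendsto_of_tendsto'
    (integral_tendsto_of_tendsto_of_monotone (fun n => (hg n).integrable hμ) hfμ
      (.of_forall hmono) (.of_forall htend))
    (integral_tendsto_of_tendsto_of_monotone (fun n => (hg n).integrable hν) hfν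
      (.of_forall hmono) (.of_forall htend))
    fun n => (hg n).integral_le hμ hν hm h

lemma convexOn_hinge (x : ℝ) : ConvexOn ℝ Set.univ fun y : ℝ => max (y - x) 0 :=
  ((convexOn_id convex_univ).sub (concaveOn_const x convex_univ)).sup
    (convexOn_const 0 convex_univ)

lemma potential_eq {μ : Measure ℝ} [IsProbabilityMeasure μ] (hμ : Integrable id μ) (x : ℝ) :
    potential μ x = (∫ y, y ∂μ) - x - 2 * ∫ y, max (y - x) 0 ∂μ := by
  have hμ' : Integrable (fun y : ℝ => y) μ := hμ
  have hsub : Integrable (fun y : ℝ => y - x) μ := hμ'.sub (integrable_const x)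
  have h (y : ℝ) : |x - y| = 2 * max (y - x) 0 - (y - x) := by
    rcases le_total x y with hxy | hxy
    · rw [abs_of_nonpos (by linarith), max_eq_left (by linarith)]; ring
    · rw [abs_of_nonneg (by linarith), max_eq_right (by linarith)]; ring
  simp only [potential, h]
  rw [integral_sub ((integrable_hinge hμ x).const_mul 2) hsub,
    integral_const_mul, integral_sub hμ' (integrable_const x)]
  simp

theorem stmt_0 (m : ℝ) (μ ν : Measure ℝ)
    [IsProbabilityMeasure μ] [IsProbabilityMeasure ν]
    (hμ : Integrable id μ) (hν : Integrable id ν)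
    (hmμ : ∫ x, x ∂μ = m) (hmν : ∫ x, x ∂ν = m) :
    (ConvexOrder μ ν ↔
      ∀ x : ℝ, ∫ y, max (y - x) 0 ∂μ ≤ ∫ y, max (y - x) 0 ∂ν) ∧
    (ConvexOrder μ ν ↔ ∀ x : ℝ, potential ν x ≤ potential μ x) := by
  have h12 : ConvexOrder μ ν ↔
      ∀ x : ℝ, ∫ y, max (y - x) 0 ∂μ ≤ ∫ y, max (y - x) 0 ∂ν :=
    ⟨fun h x => h _ (convexOn_hinge x) (integrable_hinge hμ x) (integrable_hinge hν x),
      convexOrder_of_hinge hμ hν (hmμ.trans hmν.symm)⟩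
  refine ⟨h12, h12.trans (forall_congr' fun x => ?_)⟩
  rw [potential_eq hμ, potential_eq hν, hmμ, hmν]
  constructor <;> intro h <;> linarith
end

section
/- Let m ∈ ℝ and μ ∈ M¹_m. Then the potential function u_μ(x) = −∫_ℝ |x−y| dμ(y) is a concave function on ℝ satisfying u_μ(x) ≤ −|x−m| for all x ∈ ℝ, and lim_{x→+∞} (u_μ(x) + |x−m|) = 0 as well as lim_{x→−∞} (u_μ(x) + |x−m|) = 0. -/
/-!
Concavity and the bound `u_μ(x) ≤ -|x - m|` are the triangle inequality integrated against `μ`,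
since `x - m = ∫ (x - y) dμ(y)`. For the limits, `u_μ(x) + |x - m| = ∫ (±(x - y) - |x - y|) dμ(y)`
once `x ≥ m` (sign `+`) or `x ≤ m` (sign `-`). The integrand vanishes as soon as `x` is beyond `y`
in the relevant direction, and is bounded by `2|y|` once `x` is beyond `0`, so dominated
convergence gives the limit `0`.
-/

open MeasureTheory Filter

theorem stmt_2 (m : ℝ) (μ : Measure ℝ) [IsProbabilityMeasure μ]
    (hμ : Integrable id μ) (hm : ∫ x, x ∂μ = m) :
    ConcaveOn ℝ Set.univ (potential μ) ∧
    (∀ x : ℝ, potential μ x ≤ -|x - m|) ∧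
    Tendsto (fun x => potential μ x + |x - m|) atTop (nhds 0) ∧
    Tendsto (fun x => potential μ x + |x - m|) atBot (nhds 0) := by
  have hid : Integrable (fun y : ℝ => y) μ := hμ
  have hsub : ∀ x : ℝ, Integrable (fun y => x - y) μ := fun x => (integrable_const x).sub hid
  have habs : ∀ x : ℝ, Integrable (fun y => |x - y|) μ := fun x => (hsub x).abs
  have hmean : ∀ x : ℝ, ∫ y, (x - y) ∂μ = x - m := fun x => by
    rw [integral_sub (integrable_const x) hid, hm]; simp
  have hdom : Integrable (fun y : ℝ => 2 * |y|) μ := hid.abs.const_mul 2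
  refine ⟨⟨convex_univ, ?_⟩, ?_, ?_, ?_⟩
  · intro x _ z _ a b ha hb hab
    simp only [potential, smul_eq_mul]
    have h : ∫ y, |a * x + b * z - y| ∂μ ≤ ∫ y, (a * |x - y| + b * |z - y|) ∂μ := by
      refine integral_mono (habs _) (((habs x).const_mul a).add ((habs z).const_mul b)) ?_
      intro y
      calc |a * x + b * z - y| = |a * (x - y) + b * (z - y)| := by
            congr 1; linear_combination y * hab
        _ ≤ |a * (x - y)| + |b * (z - y)| := abs_add_le _ _
        _ = a * |x - y| + b * |z - y| := by rw [abs_mul, abs_mul, abs_of_nonneg ha, abs_of_nonneg hb]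
    rw [integral_add ((habs x).const_mul a) ((habs z).const_mul b), integral_const_mul,
      integral_const_mul] at h
    linarith
  · intro x
    rw [potential, ← hmean x]
    exact neg_le_neg abs_integral_le_integral_abs
  · have key : Tendsto (fun x : ℝ => ∫ y, ((x - y) - |x - y|) ∂μ) atTop
        (nhds (∫ _, (0 : ℝ) ∂μ)) := by
      refine tendsto_integral_filter_of_dominated_convergence _
        (Eventually.of_forall fun x => ((hsub x).sub (habs x)).aestronglyMeasurable) ?_ hdom ?_
      · filter_upwards [eventually_ge_atTop 0] with x hx
        refine Eventually.of_forall fun y => ?_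
        rw [Real.norm_eq_abs]
        grind
      · refine Eventually.of_forall fun y => tendsto_const_nhds.congr' ?_
        filter_upwards [eventually_ge_atTop y] with x hx
        rw [abs_of_nonneg (sub_nonneg.2 hx), sub_self]
    rw [integral_zero] at key
    refine key.congr' ?_
    filter_upwards [eventually_ge_atTop m] with x hx
    rw [integral_sub (hsub x) (habs x), hmean, potential, abs_of_nonneg (sub_nonneg.2 hx)]
    ring
  · have key : Tendsto (fun x : ℝ => ∫ y, (-(x - y) - |x - y|) ∂μ) atBot
        (nhds (∫ _, (0 : ℝ) ∂μ)) := by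
      refine tendsto_integral_filter_of_dominated_convergence _
        (Eventually.of_forall fun x => ((hsub x).neg.sub (habs x)).aestronglyMeasurable) ?_ hdom ?_
      · filter_upwards [eventually_le_atBot 0] with x hx
        refine Eventually.of_forall fun y => ?_
        rw [Real.norm_eq_abs]
        grind
      · refine Eventually.of_forall fun y => tendsto_const_nhds.congr' ?_
        filter_upwards [eventually_le_atBot y] with x hx
        rw [abs_of_nonpos (sub_nonpos.2 hx), sub_self]
    rw [integral_zero] at key
    refine key.congr' ?_
    filter_upwards [eventually_le_atBot m] with x hx
    have hneg : Integrable (fun y => -(x - y)) μ := (hsub x).neg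
    rw [integral_sub hneg (habs x), integral_neg, hmean, potential,
      abs_of_nonpos (sub_nonpos.2 hx)]
    ring
end

section
/- Let m ∈ ℝ and let u : ℝ → ℝ be a concave function satisfying u(x) ≤ −|x−m| for all x ∈ ℝ and lim_{x→+∞} (u(x) + |x−m|) = 0 = lim_{x→−∞} (u(x) + |x−m|). Then there exists a Borel probability measure μ on ℝ with finite first moment and mean m such that u(x) = −∫_ℝ |x−y| dμ(y) for all x ∈ ℝ. -/
open MeasureTheory Filter

/-!
The measure `μ` has distribution function `(1 - d) / 2`, with `d` the right derivative of `u`.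

Put `p x = (-u x + (x - m)) / 2`. This is a nonnegative convex function with `p x → 0` at `-∞`
and `p x - (x - m) → 0` at `+∞`. Its right derivative is squeezed between
unit-step increments of `p`, so it increases from `0` to `1`; its right-continuous modification `F`
is the distribution function of a probability measure `μ`, and `p b - p a = ∫ t in a..b, F t`
(`exists_stieltjes`).

By the layer cake formula, `∫ (x - y)⁺ dμ(y) = ∫_{t > 0} F (x - t) dt = p x` and
`∫ (y - x)⁺ dμ(y) = ∫_{t > 0} (1 - F (x + t)) dt = p x - (x - m)`
(`lintegral_posPart_left`, `lintegral_posPart_right`). The sum of the two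
integrals is `∫ |x - y| dμ(y) = -u x`, and the difference at `x = 0` gives the mean `m`.
-/

/-- A convex function asymptotic to `0` at `-∞` and to `x - m` at `+∞` is a primitive of a
cumulative distribution function, namely the right-continuous version of its right derivative. -/
lemma exists_stieltjes (m : ℝ) (p : ℝ → ℝ) (hp : ConvexOn ℝ Set.univ p)
    (hbot : Tendsto p atBot (nhds 0))
    (htop : Tendsto (fun x => p x - (x - m)) atTop (nhds 0)) :
    ∃ F : StieltjesFunction ℝ, Tendsto F atBot (nhds 0) ∧ Tendsto F atTop (nhds 1) ∧
      ∀ a b : ℝ, ∫ t in a..b, F t = p b - p a := by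
  set g : ℝ → ℝ := fun x => derivWithin p (Set.Ioi x) x with hg
  have hmono : Monotone g := by
    have := hp.monotoneOn_rightDeriv
    rwa [interior_univ, monotoneOn_univ] at this
  have hup : ∀ x, g x ≤ p (x + 1) - p x := fun x => by
    have := hp.rightDeriv_le_slope_of_mem_interior (x := x) (y := x + 1)
      (by simp) (by simp) (by linarith)
    simpa [slope_def_field] using this
  have hlow : ∀ x, p x - p (x - 1) ≤ g x := fun x => by
    have h1 := hp.slope_le_leftDeriv_of_mem_interior (x := x - 1) (y := x)
      (by simp) (by simp) (by linarith)
    have h2 := hp.leftDeriv_le_rightDeriv_of_mem_interior (x := x) (by simp)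
    have := h1.trans h2
    simpa [slope_def_field] using this
  have hgbot : Tendsto g atBot (nhds 0) := by
    refine tendsto_of_tendsto_of_tendsto_of_le_of_le (g := fun x => p x - p (x - 1))
      (h := fun x => p (x + 1) - p x) ?_ ?_ hlow hup
    · simpa [← sub_eq_add_neg] using hbot.sub (hbot.comp (tendsto_atBot_add_const_right atBot (-1 : ℝ) tendsto_id))
    · simpa using (hbot.comp (tendsto_atBot_add_const_right atBot (1 : ℝ) tendsto_id)).sub hbot
  have hgtop : Tendsto g atTop (nhds 1) := by
    refine tendsto_of_tendsto_of_tendsto_of_le_of_le (g := fun x => p x - p (x - 1))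
      (h := fun x => p (x + 1) - p x) ?_ ?_ hlow hup
    · have := (htop.sub (htop.comp
        (tendsto_atTop_add_const_right atTop (-1 : ℝ) tendsto_id))).add_const 1
      simp only [sub_zero, zero_add] at this
      refine this.congr fun x => ?_
      simp only [Function.comp, id, ← sub_eq_add_neg]
      ring
    · have := ((htop.comp
        (tendsto_atTop_add_const_right atTop (1 : ℝ) tendsto_id)).sub htop).add_const 1
      simp only [sub_zero, zero_add] at this
      refine this.congr fun x => ?_
      simp only [Function.comp, id]
      ring
  refine ⟨hmono.stieltjesFunction, ?_, ?_, fun a b => ?_⟩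
  · exact tendsto_rightLim_atBot_of_tendsto hgbot
  · exact tendsto_rightLim_atTop_of_tendsto hgtop
  · have hae : ∀ᵐ x ∂(volume : Measure ℝ), hmono.stieltjesFunction x = g x := by
      filter_upwards [hmono.countable_not_continuousAt.ae_notMem volume] with x hx
      rw [hmono.stieltjesFunction_eq]
      exact (not_not.1 hx).continuousWithinAt.rightLim_eq
    rw [intervalIntegral.integral_congr_ae (g := g) (hae.mono fun x hx _ => hx)]
    refine intervalIntegral.integral_eq_sub_of_hasDeriv_right ?_ ?_ hmono.intervalIntegrable
    · exact (hp.continuousOn isOpen_univ).mono (Set.subset_univ _)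
    · exact fun x _ => hp.hasDerivWithinAt_rightDeriv_of_mem_interior (by simp)

lemma lintegral_Ioi_eq_of_tendsto (h : ℝ → ℝ) (L : ℝ) (hm : Measurable h) (h0 : ∀ t, 0 ≤ h t)
    (hi : ∀ a b, IntervalIntegrable h volume a b)
    (hL : Tendsto (fun n : ℝ => ∫ t in (0 : ℝ)..n, h t) atTop (nhds L)) :
    ∫⁻ t in Set.Ioi (0 : ℝ), ENNReal.ofReal (h t) = ENNReal.ofReal L := by
  have hc : AECover (volume.restrict (Set.Ioi (0 : ℝ))) atTop fun n : ℝ => Set.Iic n :=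
    aecover_Iic tendsto_id
  have h1 := hc.lintegral_tendsto_of_countably_generated
    (f := fun t => ENNReal.ofReal (h t)) hm.ennreal_ofReal.aemeasurable
  refine tendsto_nhds_unique h1 ((ENNReal.tendsto_ofReal hL).congr' ?_)
  filter_upwards [eventually_ge_atTop 0] with n hn
  rw [Measure.restrict_restrict measurableSet_Iic, Set.inter_comm, Set.Ioi_inter_Iic,
    intervalIntegral.integral_of_le hn, ofReal_integral_eq_lintegral_ofReal
      ((intervalIntegrable_iff_integrableOn_Ioc_of_le hn).1 (hi 0 n))
      (Eventually.of_forall h0)]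

lemma lintegral_posPart_left (p : ℝ → ℝ) (F : StieltjesFunction ℝ)
    (hF0 : Tendsto F atBot (nhds 0)) (hint : ∀ a b : ℝ, ∫ t in a..b, F t = p b - p a)
    (hbot : Tendsto p atBot (nhds 0)) (x : ℝ) :
    ∫⁻ y, ENNReal.ofReal (max (x - y) 0) ∂F.measure = ENNReal.ofReal (p x) := by
  rw [lintegral_eq_lintegral_meas_le (f := fun y => max (x - y) 0) _
    (Eventually.of_forall fun y => le_max_right _ _)
    (by fun_prop)]
  have hset : ∀ t ∈ Set.Ioi (0 : ℝ),
      F.measure {y | t ≤ max (x - y) 0} = ENNReal.ofReal (F (x - t)) := by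
    intro t ht
    have : {y | t ≤ max (x - y) 0} = Set.Iic (x - t) := by
      ext y
      have ht' : 0 < t := ht
      simp only [Set.mem_ofPred_eq, Set.mem_Iic, le_max_iff, not_le.2 ht', or_false]
      constructor <;> intro h <;> linarith
    rw [this, F.measure_Iic hF0, sub_zero]
  rw [setLIntegral_congr_fun measurableSet_Ioi hset]
  have hanti : Antitone fun t => F (x - t) := fun a b hab => F.mono (by linarith)
  refine lintegral_Ioi_eq_of_tendsto _ _ hanti.measurable
    (fun t => F.mono.le_of_tendsto hF0 _) (fun a b => hanti.intervalIntegrable) ?_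
  simp only [intervalIntegral.integral_comp_sub_left (fun t => F t) x, hint, sub_zero]
  simpa [← sub_eq_add_neg] using
    (hbot.comp (tendsto_atBot_add_const_left atTop x tendsto_neg_atTop_atBot)).const_sub (p x)

lemma lintegral_posPart_right (m : ℝ) (p : ℝ → ℝ) (F : StieltjesFunction ℝ)
    (hF1 : Tendsto F atTop (nhds 1)) (hint : ∀ a b : ℝ, ∫ t in a..b, F t = p b - p a)
    (htop : Tendsto (fun x => p x - (x - m)) atTop (nhds 0)) (x : ℝ) :
    ∫⁻ y, ENNReal.ofReal (max (y - x) 0) ∂F.measure = ENNReal.ofReal (p x - (x - m)) := by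
  rw [lintegral_eq_lintegral_meas_lt (f := fun y => max (y - x) 0) _
    (Eventually.of_forall fun y => le_max_right _ _)
    (by fun_prop)]
  have hset : ∀ t ∈ Set.Ioi (0 : ℝ),
      F.measure {y | t < max (y - x) 0} = ENNReal.ofReal (1 - F (x + t)) := by
    intro t ht
    have : {y | t < max (y - x) 0} = Set.Ioi (x + t) := by
      ext y
      have ht' : 0 < t := ht
      simp only [Set.mem_ofPred_eq, Set.mem_Ioi, lt_max_iff, not_lt.2 ht'.le, or_false]
      constructor <;> intro h <;> linarith
    rw [this, F.measure_Ioi hF1]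
  rw [setLIntegral_congr_fun measurableSet_Ioi hset]
  have hm : Monotone fun t => F (x + t) := fun a b hab => F.mono (by linarith)
  refine lintegral_Ioi_eq_of_tendsto _ _ (measurable_const.sub hm.measurable)
    (fun t => sub_nonneg.2 (F.mono.ge_of_tendsto hF1 _))
    (fun a b => intervalIntegrable_const.sub hm.intervalIntegrable) ?_
  have hval : ∀ n : ℝ, ∫ t in (0 : ℝ)..n, (1 - F (x + t))
      = (p x - (x - m)) - (p (x + n) - (x + n - m)) := fun n => by
    rw [intervalIntegral.integral_sub intervalIntegrable_const hm.intervalIntegrable,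
      intervalIntegral.integral_comp_add_left (fun t => F t) x, hint]
    simp
    ring
  simp only [hval]
  simpa using (htop.comp (tendsto_atTop_add_const_left atTop x tendsto_id)).const_sub
    (p x - (x - m))

lemma integrable_and_integral_eq {μ : Measure ℝ} {f : ℝ → ℝ} {L : ℝ} (hm : Measurable f)
    (h0 : ∀ y, 0 ≤ f y) (hL : 0 ≤ L)
    (h : ∫⁻ y, ENNReal.ofReal (f y) ∂μ = ENNReal.ofReal L) :
    Integrable f μ ∧ ∫ y, f y ∂μ = L := by
  constructor
  · rw [← lintegral_ofReal_ne_top_iff_integrable hm.aestronglyMeasurable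
      (Eventually.of_forall h0), h]
    exact ENNReal.ofReal_ne_top
  · rw [integral_eq_lintegral_of_nonneg_ae (Eventually.of_forall h0) hm.aestronglyMeasurable, h,
      ENNReal.toReal_ofReal hL]

theorem stmt_3 (m : ℝ) (u : ℝ → ℝ)
    (hconc : ConcaveOn ℝ Set.univ u)
    (hle : ∀ x : ℝ, u x ≤ -|x - m|)
    (htop : Tendsto (fun x => u x + |x - m|) atTop (nhds 0))
    (hbot : Tendsto (fun x => u x + |x - m|) atBot (nhds 0)) :
    ∃ μ : Measure ℝ, IsProbabilityMeasure μ ∧ Integrable id μ ∧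
      (∫ x, x ∂μ = m) ∧ ∀ x : ℝ, u x = -∫ y, |x - y| ∂μ := by
  set p : ℝ → ℝ := fun x => (-u x + (x - m)) / 2 with hpdef
  have hp : ConvexOn ℝ Set.univ p := by
    refine ⟨convex_univ, fun x _ y _ a b ha hb hab => ?_⟩
    have := hconc.2 (Set.mem_univ x) (Set.mem_univ y) ha hb hab
    simp only [smul_eq_mul, hpdef] at this ⊢
    have hm : m = a * m + b * m := by rw [← add_mul, hab, one_mul]
    linarith
  have hp0 : ∀ x, 0 ≤ p x := fun x => by
    have := hle x
    have := neg_abs_le (x - m)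
    simp only [hpdef]
    linarith
  have hq0 : ∀ x, 0 ≤ p x - (x - m) := fun x => by
    have := hle x
    have := le_abs_self (x - m)
    simp only [hpdef]
    linarith
  have hpbot : Tendsto p atBot (nhds 0) := by
    have h := hbot.const_mul (-1 / 2)
    rw [mul_zero] at h
    refine h.congr' ?_
    filter_upwards [eventually_le_atBot m] with x hx
    rw [abs_of_nonpos (by linarith)]
    simp only [hpdef]
    ring
  have hptop : Tendsto (fun x => p x - (x - m)) atTop (nhds 0) := by
    have h := htop.const_mul (-1 / 2)
    rw [mul_zero] at h
    refine h.congr' ?_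
    filter_upwards [eventually_ge_atTop m] with x hx
    rw [abs_of_nonneg (by linarith)]
    simp only [hpdef]
    ring
  obtain ⟨F, hF0, hF1, hint⟩ := exists_stieltjes m p hp hpbot hptop
  have hL : ∀ x, Integrable (fun y => max (x - y) 0) F.measure ∧
      ∫ y, max (x - y) 0 ∂F.measure = p x := fun x =>
    integrable_and_integral_eq (by fun_prop) (fun y => le_max_right _ _) (hp0 x)
      (lintegral_posPart_left p F hF0 hint hpbot x)
  have hR : ∀ x, Integrable (fun y => max (y - x) 0) F.measure ∧
      ∫ y, max (y - x) 0 ∂F.measure = p x - (x - m) := fun x =>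
    integrable_and_integral_eq (by fun_prop) (fun y => le_max_right _ _) (hq0 x)
      (lintegral_posPart_right m p F hF1 hint hptop x)
  have hid : (fun y : ℝ => y) = fun y => max (y - 0) 0 - max (0 - y) 0 := by
    funext y
    rcases le_total 0 y with h | h <;> simp [h]
  refine ⟨F.measure, F.isProbabilityMeasure hF0 hF1, ?_, ?_, fun x => ?_⟩
  · change Integrable (fun y : ℝ => y) F.measure
    rw [hid]
    exact (hR 0).1.sub (hL 0).1
  · rw [hid, integral_sub (hR 0).1 (hL 0).1, (hR 0).2, (hL 0).2]
    ring
  · have habs : (fun y : ℝ => |x - y|) = fun y => max (x - y) 0 + max (y - x) 0 := by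
      funext y
      rcases le_total x y with h | h
      · rw [abs_of_nonpos (by linarith), max_eq_right (by linarith), max_eq_left (by linarith)]
        ring
      · rw [abs_of_nonneg (by linarith), max_eq_left (by linarith), max_eq_right (by linarith)]
        ring
    rw [habs, integral_add (hL x).1 (hR x).1, (hL x).2, (hR x).2]
    simp only [hpdef]
    ring
end

section
/- Let (μ_n)_{n∈ℕ} and μ be Borel probability measures on ℝ with finite first moments. If u_{μ_n}(x) → u_μ(x) as n → ∞ for every x ∈ ℝ, then μ_n converges weakly to μ. -/
/-!
Write `F_μ` for the distribution function of `μ`. The function `-u_μ` is convex with right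
derivative `2 F_μ - 1`, so its slope `s` over `[a, b]` satisfies `F_μ(a) ≤ (1 + s) / 2 ≤ F_μ(b)`
(`cdf_le_quotient`, `quotient_le_cdf`; both follow by integrating pointwise bounds on the ramp
function `y ↦ (b - a) + |b - y| - |a - y|`, which is `2 (b - a)` left of `a` and `0` right of `b`).
Pointwise convergence of the potentials gives convergence of these slopes, and squeezing
yields `F_{μ_n}(x) → F_μ(x)` at each continuity point `x` of `F_μ` (`tendsto_cdf_of_potential`).
The intervals `(l, u]` with endpoints among these continuity points form a π-system containing
arbitrarily small neighbourhoods of each point, because a monotone function has only countably many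
discontinuities. Convergence on such a π-system implies weak convergence.
-/

open MeasureTheory Filter

open ProbabilityTheory Set Topology

lemma integrable_abs_sub (μ : Measure ℝ) [IsProbabilityMeasure μ] (hμ : Integrable id μ) (x : ℝ) :
    Integrable (fun y => |x - y|) μ :=
  ((integrable_const x).sub hμ).abs

lemma integral_indicator_Iic (μ : Measure ℝ) [IsProbabilityMeasure μ] (x c : ℝ) :
    ∫ y, (Iic x).indicator (fun _ => c) y ∂μ = c * cdf μ x := by
  rw [integral_indicator measurableSet_Iic, setIntegral_const, cdf_eq_real, smul_eq_mul, mul_comm]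

lemma integral_ramp (μ : Measure ℝ) [IsProbabilityMeasure μ] (hμ : Integrable id μ) (a b : ℝ) :
    ∫ y, ((b - a) + (|b - y| - |a - y|)) ∂μ = (b - a) - (potential μ b - potential μ a) := by
  have ha := integrable_abs_sub μ hμ a
  have hb := integrable_abs_sub μ hμ b
  rw [integral_add (integrable_const _) (by exact hb.sub ha), integral_sub hb ha]
  simp [potential]
  ring

lemma cdf_le_quotient (μ : Measure ℝ) [IsProbabilityMeasure μ] (hμ : Integrable id μ)
    {a b : ℝ} (hab : a < b) :
    cdf μ a ≤ ((b - a) - (potential μ b - potential μ a)) / (2 * (b - a)) := by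
  rw [le_div_iff₀ (by linarith), mul_comm, ← integral_indicator_Iic, ← integral_ramp μ hμ]
  refine integral_mono ((integrable_const _).indicator measurableSet_Iic)
    ((integrable_const _).add ((integrable_abs_sub μ hμ b).sub (integrable_abs_sub μ hμ a))) ?_
  intro y
  simp only [indicator_apply, mem_Iic]
  split_ifs with h
  · rw [abs_of_nonneg (by linarith : 0 ≤ b - y), abs_of_nonneg (by linarith : 0 ≤ a - y)]
    linarith
  · have := abs_sub_abs_le_abs_sub (a - y) (b - y)
    rw [show a - y - (b - y) = -(b - a) by ring, abs_neg, abs_of_pos (by linarith : 0 < b - a)] at this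
    linarith

lemma quotient_le_cdf (μ : Measure ℝ) [IsProbabilityMeasure μ] (hμ : Integrable id μ)
    {a b : ℝ} (hab : a < b) :
    ((b - a) - (potential μ b - potential μ a)) / (2 * (b - a)) ≤ cdf μ b := by
  rw [div_le_iff₀ (by linarith), mul_comm (cdf μ b), ← integral_indicator_Iic,
    ← integral_ramp μ hμ]
  refine integral_mono
    ((integrable_const _).add ((integrable_abs_sub μ hμ b).sub (integrable_abs_sub μ hμ a)))
    ((integrable_const _).indicator measurableSet_Iic) ?_
  intro y
  simp only [indicator_apply, mem_Iic]
  split_ifs with h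
  · have := abs_sub_abs_le_abs_sub (b - y) (a - y)
    rw [show b - y - (a - y) = b - a by ring, abs_of_pos (by linarith : 0 < b - a)] at this
    linarith
  · rw [abs_of_nonpos (by linarith : b - y ≤ 0), abs_of_nonpos (by linarith : a - y ≤ 0)]
    linarith

lemma tendsto_cdf_of_potential (μs : ℕ → Measure ℝ) (μ : Measure ℝ)
    [∀ n, IsProbabilityMeasure (μs n)] [IsProbabilityMeasure μ]
    (hμs : ∀ n, Integrable id (μs n)) (hμ : Integrable id μ)
    (hconv : ∀ x : ℝ, Tendsto (fun n => potential (μs n) x) atTop (𝓝 (potential μ x)))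
    {x : ℝ} (hx : ContinuousAt (cdf μ) x) :
    Tendsto (fun n => cdf (μs n) x) atTop (𝓝 (cdf μ x)) := by
  have hq (a b : ℝ) : Tendsto
      (fun n => ((b - a) - (potential (μs n) b - potential (μs n) a)) / (2 * (b - a))) atTop
      (𝓝 (((b - a) - (potential μ b - potential μ a)) / (2 * (b - a)))) :=
    (tendsto_const_nhds.sub ((hconv b).sub (hconv a))).div_const _
  refine tendsto_order.2 ⟨fun r hr => ?_, fun r hr => ?_⟩
  · obtain ⟨a, ha, hax⟩ := (((hx.eventually (lt_mem_nhds hr)).filter_mono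
      nhdsWithin_le_nhds).and (self_mem_nhdsWithin (s := Iio x))).exists
    filter_upwards [(hq a x).eventually (lt_mem_nhds (ha.trans_le (cdf_le_quotient μ hμ hax)))]
      with n hn
    exact hn.trans_le (quotient_le_cdf (μs n) (hμs n) hax)
  · obtain ⟨b, hb, hxb⟩ := (((hx.eventually (gt_mem_nhds hr)).filter_mono
      nhdsWithin_le_nhds).and (self_mem_nhdsWithin (s := Ioi x))).exists
    filter_upwards [(hq x b).eventually (gt_mem_nhds ((quotient_le_cdf μ hμ hxb).trans_lt hb))]
      with n hn
    exact (cdf_le_quotient (μs n) (hμs n) hxb).trans_lt hn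

lemma measureReal_Ioc_eq_cdf_sub (μ : Measure ℝ) [IsProbabilityMeasure μ] {a b : ℝ} (h : a ≤ b) :
    μ.real (Ioc a b) = cdf μ b - cdf μ a := by
  rw [cdf_eq_real, cdf_eq_real, ← Iic_sdiff_Iic,
    measureReal_sdiff (Iic_subset_Iic.2 h) measurableSet_Iic]

theorem stmt_6 (μs : ℕ → Measure ℝ) (μ : Measure ℝ)
    [∀ n, IsProbabilityMeasure (μs n)] [IsProbabilityMeasure μ]
    (hμs : ∀ n, Integrable id (μs n)) (hμ : Integrable id μ)
    (hconv : ∀ x : ℝ, Tendsto (fun n => potential (μs n) x) atTop (nhds (potential μ x))) :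
    ∀ f : BoundedContinuousFunction ℝ ℝ,
      Tendsto (fun n => ∫ x, f x ∂(μs n)) atTop (nhds (∫ x, f x ∂μ)) := by
  let D : Set ℝ := {x | ContinuousAt (cdf μ) x}
  have hD : Dense D := by
    have := (monotone_cdf μ).countable_not_continuousAt.dense_compl ℝ
    simpa [D, compl_ofPred] using this
  let P : ProbabilityMeasure ℝ := ⟨μ, inferInstance⟩
  let Ps : ℕ → ProbabilityMeasure ℝ := fun n => ⟨μs n, inferInstance⟩
  suffices h : Tendsto Ps atTop (𝓝 P) from
    ProbabilityMeasure.tendsto_iff_forall_integral_tendsto.1 h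
  refine (isPiSystem_Ioc_mem D D).tendsto_probabilityMeasure_of_tendsto_of_mem ?_ ?_ ?_
  · rintro _ ⟨l, -, u, -, -, rfl⟩
    exact measurableSet_Ioc
  · intro U hU x hx
    obtain ⟨a, b, ⟨hax, hxb⟩, hab⟩ := mem_nhds_iff_exists_Ioo_subset.1 (hU.mem_nhds hx)
    obtain ⟨l, hl, hal, hlx⟩ := hD.exists_between hax
    obtain ⟨u, hu, hxu, hub⟩ := hD.exists_between hxb
    exact ⟨Ioc l u, ⟨l, hl, u, hu, hlx.trans hxu, rfl⟩, Ioc_mem_nhds hlx hxu,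
      fun y hy => hab ⟨hal.trans hy.1, hy.2.trans_lt hub⟩⟩
  · rintro _ ⟨l, hl, u, hu, hlu, rfl⟩
    rw [← NNReal.tendsto_coe]
    change Tendsto (fun n => (μs n).real (Ioc l u)) atTop (𝓝 (μ.real (Ioc l u)))
    simp only [measureReal_Ioc_eq_cdf_sub _ hlu.le]
    exact (tendsto_cdf_of_potential μs μ hμs hμ hconv hu).sub
      (tendsto_cdf_of_potential μs μ hμs hμ hconv hl)
end

section
/- Let μ and ν be Borel probability measures on ℝ with finite first moments such that μ ≤_cx ν. Then u_μ(x) − u_ν(x) → 0 as |x| → ∞, i.e. lim_{x→+∞} (u_μ(x) − u_ν(x)) = 0 and lim_{x→−∞} (u_μ(x) − u_ν(x)) = 0. -/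
/-!
Testing the convex order against `y` and `-y` shows that `μ` and `ν` have the same mean. By dominated
convergence, with `||x - y| - |x|| ≤ |y|`, the function `x ↦ ∫ (|x - y| - |x|) dμ(y)` tends to
`-∫ y dμ(y)` at `+∞` and to `∫ y dμ(y)` at `-∞`, and likewise for `ν`. Since
`u_μ(x) + |x| = -∫ (|x - y| - |x|) dμ(y)`, the difference of potentials tends to the difference of
the means up to sign, which is `0`.
-/

open MeasureTheory Filter

/-- Equality of means, from the order tested on the two convex functions `y` and `-y`. -/
theorem ConvexOrder.integral_id_eq {μ ν : Measure ℝ} (hμ : Integrable id μ) (hν : Integrable id ν)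
    (hcx : ConvexOrder μ ν) : ∫ y, id y ∂μ = ∫ y, id y ∂ν := by
  apply le_antisymm (hcx id (convexOn_id convex_univ) hμ hν)
  have h := hcx (fun y => -id y) (concaveOn_id convex_univ).neg hμ.neg hν.neg
  rw [integral_neg, integral_neg] at h
  linarith

theorem potential_add_abs (μ : Measure ℝ) [IsProbabilityMeasure μ] (hμ : Integrable id μ) (x : ℝ) :
    potential μ x + |x| = -∫ y, (|x - y| - |x|) ∂μ := by
  have hi : Integrable (fun y => |x - y|) μ := ((integrable_const x).sub hμ).abs
  rw [integral_sub hi (integrable_const _)]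
  simp [potential, neg_add_eq_sub]

/-- Dominated convergence for `u_μ(x) + |x|`, along a filter where `|x - y| - |x|` is eventually
equal to a limit `g y`, for each `y`. -/
theorem tendsto_potential_add_abs (μ : Measure ℝ) [IsProbabilityMeasure μ] (hμ : Integrable id μ)
    {l : Filter ℝ} [l.IsCountablyGenerated] {g : ℝ → ℝ}
    (hg : ∀ y, ∀ᶠ x in l, |x - y| - |x| = g y) :
    Tendsto (fun x => potential μ x + |x|) l (nhds (-∫ y, g y ∂μ)) := by
  simp_rw [potential_add_abs μ hμ]
  refine (tendsto_integral_filter_of_dominated_convergence (fun y => |id y|) ?_ ?_ hμ.abs ?_).neg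
  · exact Eventually.of_forall fun x => by fun_prop
  · refine Eventually.of_forall fun x => Eventually.of_forall fun y => ?_
    have h := abs_abs_sub_abs_le (x - y) x
    rwa [sub_sub_cancel_left, abs_neg] at h
  · exact Eventually.of_forall fun y => tendsto_const_nhds.congr' ((hg y).mono fun x hx => hx.symm)

theorem stmt_8 (μ ν : Measure ℝ)
    [IsProbabilityMeasure μ] [IsProbabilityMeasure ν]
    (hμ : Integrable id μ) (hν : Integrable id ν)
    (hcx : ConvexOrder μ ν) :
    Tendsto (fun x => potential μ x - potential ν x) atTop (nhds 0) ∧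
    Tendsto (fun x => potential μ x - potential ν x) atBot (nhds 0) := by
  have hm := hcx.integral_id_eq hμ hν
  constructor
  · have hg : ∀ y : ℝ, ∀ᶠ x in atTop, |x - y| - |x| = -id y := fun y => by
      filter_upwards [eventually_ge_atTop 0, eventually_ge_atTop y] with x h0 hy
      rw [abs_of_nonneg h0, abs_of_nonneg (sub_nonneg.2 hy), id]
      ring
    have h := (tendsto_potential_add_abs μ hμ hg).sub (tendsto_potential_add_abs ν hν hg)
    simpa only [add_sub_add_right_eq_sub, integral_neg, hm, sub_self] using h
  · have hg : ∀ y : ℝ, ∀ᶠ x in atBot, |x - y| - |x| = id y := fun y => by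
      filter_upwards [eventually_le_atBot 0, eventually_le_atBot y] with x h0 hy
      rw [abs_of_nonpos h0, abs_of_nonpos (sub_nonpos.2 hy), id]
      ring
    have h := (tendsto_potential_add_abs μ hμ hg).sub (tendsto_potential_add_abs ν hν hg)
    simpa only [add_sub_add_right_eq_sub, hm, sub_self] using h
end

section
/- Let μ be a Borel probability measure on ℝ with finite first moment. Then the potential function u_μ is differentiable from the right and from the left at every x ∈ ℝ: its right derivative at x equals 1 − 2·μ((−∞, x]) and its left derivative at x equals 1 − 2·μ((−∞, x)). -/
/-!
The one-sided derivative in `x` of `|x - y|` is `±1`: on the right it is `1` for `y ≤ x` and `-1`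
for `y > x`; on the left it is `1` for `y < x` and `-1` for `y ≥ x`. All difference quotients are
bounded by `1`, because `|· - y|` is `1`-Lipschitz, so dominated convergence allows
differentiation under the integral sign (`hasDerivWithinAt_potential`). Integrating
`2 * 1_A - 1`, with `A = (-∞, x]` or `A = (-∞, x)`, gives the two formulas.
-/

open MeasureTheory

open Filter Topology Set

/-- One-sided differentiation under the integral sign: if `|· - y|` has derivative `2 * 1_A(y) - 1`
at `x` within `s` for every `y`, then the potential has derivative `1 - 2 μ(A)`. -/
lemma hasDerivWithinAt_potential (μ : Measure ℝ) [IsProbabilityMeasure μ] (hμ : Integrable id μ)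
    {x : ℝ} {s A : Set ℝ} (hA : MeasurableSet A)
    (h : ∀ y, HasDerivWithinAt (fun z => |z - y|) (2 * A.indicator 1 y - 1) s x) :
    HasDerivWithinAt (potential μ) (1 - 2 * (μ A).toReal) s x := by
  have hint : ∀ z : ℝ, Integrable (fun y => |z - y|) μ := fun z =>
    ((integrable_const z).sub hμ).abs
  have hval : ∫ y, (2 * A.indicator (1 : ℝ → ℝ) y - 1) ∂μ = 2 * (μ A).toReal - 1 := by
    have hind : Integrable (A.indicator (1 : ℝ → ℝ)) μ :=
      (integrable_indicator_iff hA).2 (integrable_const (1 : ℝ)).integrableOn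
    rw [integral_sub (hind.const_mul 2) (integrable_const _), integral_const_mul,
      integral_indicator_one hA]
    simp [Measure.real]
  have key : HasDerivWithinAt (fun z => ∫ y, |z - y| ∂μ) (2 * (μ A).toReal - 1) s x := by
    rw [hasDerivWithinAt_iff_tendsto_slope, ← hval]
    have hslope : slope (fun z => ∫ y, |z - y| ∂μ) x =
        fun z => ∫ y, slope (fun w => |w - y|) x z ∂μ := by
      funext z
      simp only [slope_def_field]
      rw [integral_div, integral_sub (hint z) (hint x)]
    rw [hslope]
    refine tendsto_integral_filter_of_dominated_convergence (fun _ => 1) ?_ ?_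
      (integrable_const _) ?_
    · refine Eventually.of_forall fun z => ?_
      simp only [slope_def_field]
      exact (((hint z).sub (hint x)).div_const _).aestronglyMeasurable
    · refine Eventually.of_forall fun z => Eventually.of_forall fun y => ?_
      rw [slope_def_field, norm_div, Real.norm_eq_abs, Real.norm_eq_abs]
      refine div_le_one_of_le₀ ?_ (abs_nonneg _)
      simpa using abs_abs_sub_abs_le_abs_sub (z - y) (x - y)
    · exact Eventually.of_forall fun y => hasDerivWithinAt_iff_tendsto_slope.1 (h y)
  have := key.neg
  rw [neg_sub] at this
  exact this

theorem stmt_9 (μ : Measure ℝ) [IsProbabilityMeasure μ] (hμ : Integrable id μ) :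
    ∀ x : ℝ,
      HasDerivWithinAt (potential μ) (1 - 2 * (μ (Set.Iic x)).toReal) (Set.Ici x) x ∧
      HasDerivWithinAt (potential μ) (1 - 2 * (μ (Set.Iio x)).toReal) (Set.Iic x) x := by
  intro x
  have hpos : ∀ y (s : Set ℝ), HasDerivWithinAt (fun z => z - y) (1 : ℝ) s x := fun y s =>
    (hasDerivWithinAt_id x s).sub_const y
  have hneg : ∀ y (s : Set ℝ), HasDerivWithinAt (fun z => -(z - y)) (-1 : ℝ) s x := fun y s =>
    (hpos y s).neg
  constructor
  · refine hasDerivWithinAt_potential μ hμ measurableSet_Iic fun y => ?_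
    by_cases hy : y ≤ x
    · have : (2 * (Iic x).indicator 1 y - 1 : ℝ) = 1 := by simp [hy]; norm_num
      rw [this]
      refine (hpos y _).congr (fun z hz => abs_of_nonneg ?_) (abs_of_nonneg (by linarith))
      linarith [mem_Ici.1 hz]
    · have : (2 * (Iic x).indicator 1 y - 1 : ℝ) = -1 := by simp [hy]
      rw [this]
      refine (hneg y _).congr_of_eventuallyEq ?_ (abs_of_neg (by linarith))
      filter_upwards [mem_nhdsWithin_of_mem_nhds (Iio_mem_nhds (not_le.1 hy))] with z hz
      exact abs_of_neg (sub_neg.2 hz)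
  · refine hasDerivWithinAt_potential μ hμ measurableSet_Iio fun y => ?_
    by_cases hy : y < x
    · have : (2 * (Iio x).indicator 1 y - 1 : ℝ) = 1 := by simp [hy]; norm_num
      rw [this]
      refine (hpos y _).congr_of_eventuallyEq ?_ (abs_of_pos (by linarith))
      filter_upwards [mem_nhdsWithin_of_mem_nhds (Ioi_mem_nhds hy)] with z hz
      exact abs_of_pos (sub_pos.2 hz)
    · have : (2 * (Iio x).indicator 1 y - 1 : ℝ) = -1 := by simp [hy]
      rw [this]
      refine (hneg y _).congr (fun z hz => abs_of_nonpos ?_) (abs_of_nonpos (by linarith))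
      linarith [mem_Iic.1 hz]
end

section
/- Equip the compact metric space K₀ := [0,1] × [−1,1] (with the Euclidean metric) with its hyperspace of nonempty closed subsets carrying the Hausdorff metric ρ. Let 𝓚 be the collection of all closed subsets R of K₀ satisfying: (i) if (t,x) ∈ R and t ≤ s ≤ 1 then (s,x) ∈ R; (ii) {1} × [−1,1] ⊆ R; (iii) [0,1] × {−1,1} ⊆ R. Then every element of 𝓚 is nonempty, the hyperspace of nonempty closed subsets of K₀ with the Hausdorff metric is a compact separable metric space, and 𝓚 is a closed (hence compact) subset of it. -/
/-!
Compactness and separability of the hyperspace are inherited from the compact rectangle `K₀`, since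
the Hausdorff metric on nonempty compact sets induces the Vietoris topology.

For closedness, the set of barriers is written as an intersection of closed conditions. Containing
a given point `q` is a closed condition on `A`, which handles the lines that a barrier must contain.
Forward-closedness in time says that `A` is stable under each of the continuous maps
`(t, x) ↦ (max t s, x)`, `s ∈ [0, 1]` (`pushForward`), and stability `f(A) ⊆ A` is the equation
`f(A) ∪ A = A` between continuous functions of `A` (`isClosed_setOf_mapsTo`).
-/

open TopologicalSpace

/-- The compact rectangle `K₀ = [0,1] × [-1,1] ⊆ ℝ × ℝ`. -/
def K₀ : Set (ℝ × ℝ) := Set.Icc ((0 : ℝ), (-1 : ℝ)) ((1 : ℝ), (1 : ℝ))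

/-- A (compactified) Root barrier: a closed subset of `K₀ = [0,1] × [-1,1]` that is
forward-closed in time and contains the lines `{1} × [-1,1]` and `[0,1] × {±1}`. -/
def IsBarrier (R : Set ↥K₀) : Prop :=
  IsClosed R ∧
  (∀ p : ↥K₀, p ∈ R → ∀ q : ↥K₀, (q : ℝ × ℝ).2 = (p : ℝ × ℝ).2 →
      (p : ℝ × ℝ).1 ≤ (q : ℝ × ℝ).1 → q ∈ R) ∧
  (∀ q : ↥K₀, (q : ℝ × ℝ).1 = 1 → q ∈ R) ∧
  (∀ q : ↥K₀, ((q : ℝ × ℝ).2 = -1 ∨ (q : ℝ × ℝ).2 = 1) → q ∈ R)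

/-- Push a point of `K₀` forward in time at least to the time coordinate of `q`:
`(t, x) ↦ (max t q.1, x)`. The level is given by a point `q` of `K₀`, so that it lies in `[0,1]`. -/
def pushForward (q p : ↥K₀) : ↥K₀ :=
  ⟨(max (p : ℝ × ℝ).1 (q : ℝ × ℝ).1, (p : ℝ × ℝ).2),
    ⟨⟨le_max_of_le_left p.2.1.1, p.2.1.2⟩, ⟨max_le p.2.2.1 q.2.2.1, p.2.2.2⟩⟩⟩

lemma continuous_pushForward (q : ↥K₀) : Continuous (pushForward q) := by
  unfold pushForward
  fun_prop

lemma isClosed_setOf_mem {X : Type*} [TopologicalSpace X] [T1Space X] (q : X) :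
    IsClosed {A : NonemptyCompacts X | q ∈ (A : Set X)} := by
  simpa using NonemptyCompacts.isClosed_inter_nonempty_of_isClosed (isClosed_singleton (x := q))

lemma isClosed_setOf_mapsTo {X : Type*} [TopologicalSpace X] [T2Space X] {f : X → X}
    (hf : Continuous f) :
    IsClosed {A : NonemptyCompacts X | ∀ p ∈ (A : Set X), f p ∈ (A : Set X)} := by
  have h : {A : NonemptyCompacts X | ∀ p ∈ (A : Set X), f p ∈ (A : Set X)} =
      {A : NonemptyCompacts X | A.map f hf ⊔ A = A} := by
    ext A
    rw [Set.mem_ofPred_eq, Set.mem_ofPred_eq, sup_eq_right, ← SetLike.coe_subset_coe,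
      NonemptyCompacts.coe_map, Set.image_subset_iff]
    rfl
  rw [h]
  exact isClosed_eq (hf.nonemptyCompacts_map.sup continuous_id) continuous_id

lemma isBarrier_iff (A : NonemptyCompacts ↥K₀) :
    IsBarrier (A : Set ↥K₀) ↔
      (∀ q : ↥K₀, ∀ p ∈ (A : Set ↥K₀), pushForward q p ∈ (A : Set ↥K₀)) ∧
      (∀ q : ↥K₀, (q : ℝ × ℝ).1 = 1 → q ∈ (A : Set ↥K₀)) ∧
      (∀ q : ↥K₀, ((q : ℝ × ℝ).2 = -1 ∨ (q : ℝ × ℝ).2 = 1) → q ∈ (A : Set ↥K₀)) := by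
  constructor
  · rintro ⟨-, hmono, h⟩
    exact ⟨fun q p hp => hmono p hp _ rfl (le_max_left _ _), h⟩
  · rintro ⟨hpush, h⟩
    refine ⟨A.isCompact.isClosed, fun p hp q hx ht => ?_, h⟩
    -- a point `q` later than `p` on the same horizontal line is `p` pushed to the time of `q`
    have hq : pushForward q p = q :=
      Subtype.ext (Prod.ext (max_eq_right ht) hx.symm)
    exact hq ▸ hpush q p hp

theorem stmt_11 :
    -- every barrier is nonempty
    (∀ R : Set ↥K₀, IsBarrier R → R.Nonempty) ∧
    -- the hyperspace of nonempty closed (= compact) subsets of `K₀` with the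
    -- Hausdorff metric is a compact separable metric space
    CompactSpace (NonemptyCompacts ↥K₀) ∧
    SeparableSpace (NonemptyCompacts ↥K₀) ∧
    -- the set of barriers is a closed subset of it
    IsClosed {A : NonemptyCompacts ↥K₀ | IsBarrier (A : Set ↥K₀)} := by
  have : CompactSpace ↥K₀ := isCompact_iff_compactSpace.mp isCompact_Icc
  refine ⟨fun R hR => ?_, inferInstance, inferInstance, ?_⟩
  · exact ⟨⟨(1, 1), by constructor <;> constructor <;> norm_num⟩, hR.2.2.1 _ rfl⟩
  · have h :=
      (isClosed_iInter fun q => isClosed_setOf_mapsTo (continuous_pushForward q)).inter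
        ((isClosed_iInter fun q : ↥K₀ => isClosed_iInter fun _ : (q : ℝ × ℝ).1 = 1 =>
          isClosed_setOf_mem q).inter
        (isClosed_iInter fun q : ↥K₀ => isClosed_iInter
          fun _ : (q : ℝ × ℝ).2 = -1 ∨ (q : ℝ × ℝ).2 = 1 => isClosed_setOf_mem q))
    simpa only [isBarrier_iff, Set.ofPred_and, Set.ofPred_forall] using h
end

section
/- Let ν be a Borel probability measure on ℝ, let (Ω, 𝓕, ℙ) be a probability space and let Y = (Y_t)_{t≥0} be a jointly measurable real-valued process all of whose paths t ↦ Y_t(ω) are continuous. Let Q, R ⊆ [0,∞) × ℝ be closed sets that are forward-closed in time (i.e. (t,x) ∈ Q implies (t+r, x) ∈ Q for all r ≥ 0, and the same for R), and define the first hitting times τ_Q(ω) := inf{ t ≥ 0 : (t, Y_t(ω)) ∈ Q } and τ_R(ω) := inf{ t ≥ 0 : (t, Y_t(ω)) ∈ R }. Assume τ_Q and τ_R are measurable and a.s. finite and that Y_{τ_Q} and Y_{τ_R} each have law ν. Then Q ∪ R and Q ∩ R are again closed and forward-closed in time, the first hitting time of Q ∪ R equals min(τ_Q, τ_R), and both Y_{min(τ_Q,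 τ_R)} and Y_{max(τ_Q, τ_R)} have law ν. -/
/-!
Let `A` be the set of levels `x` at which `Q` starts strictly earlier than `R`
(`earlierSection Q R`); it is Borel because, `R` being closed, the strict inequality is witnessed
by a rational time. Write `a = τ_Q` and `b = τ_R`. Pathwise, `a < b` forces `Y_a ∈ A`, while
`Y_b ∈ A` forces `a ≤ b`, because the point `(b, Y_b) ∈ R` then already lies in `Q`. Hence
`{Y_b ∈ A} ⊆ {Y_a ∈ A}` almost surely, and since both events have probability `ν A`, they agree
almost surely.

On this common event `a ≤ b`, and off it `b ≤ a`. So `Y_{min(a,b)}` equals `Y_a` where `Y_a ∈ A` and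
`Y_b` where `Y_b ∉ A`, and symmetrically for `max`. Gluing two variables of law `ν` along the
partition `A`, `Aᶜ` of their values gives a variable of law `ν` (`map_eq_of_glue`).
-/

open MeasureTheory

/-- A set of time-space points is forward-closed in time. -/
def ForwardClosed (B : Set (ℝ × ℝ)) : Prop :=
  ∀ t x : ℝ, (t, x) ∈ B → ∀ r : ℝ, 0 ≤ r → (t + r, x) ∈ B

/-- First hitting time of the set `B` by the time-space process `t ↦ (t, Y t ω)`. -/
noncomputable def hitTime {Ω : Type*} (B : Set (ℝ × ℝ)) (Y : ℝ → Ω → ℝ) (ω : Ω) : ℝ :=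
  sInf {t : ℝ | 0 ≤ t ∧ (t, Y t ω) ∈ B}

/-- The levels `x` at which `Q` contains a point `(t, x)` outside `R`. For closed forward-closed sets
these are the levels where `Q` starts strictly before `R`, and restricting to rational `t` loses
nothing. -/
def earlierSection (Q R : Set (ℝ × ℝ)) : Set ℝ :=
  ⋃ t : ℚ, {x : ℝ | ((t : ℝ), x) ∈ Q ∧ ((t : ℝ), x) ∉ R}

lemma measurableSet_earlierSection {Q R : Set (ℝ × ℝ)} (hQ : IsClosed Q) (hR : IsClosed R) :
    MeasurableSet (earlierSection Q R) := by
  refine MeasurableSet.iUnion fun t => ?_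
  have hm : Measurable fun x : ℝ => ((t : ℝ), x) := by fun_prop
  exact (hm hQ.measurableSet).inter (hm hR.measurableSet).compl

lemma ForwardClosed.mem_of_le {B : Set (ℝ × ℝ)} (hB : ForwardClosed B) {s t x : ℝ}
    (h : (s, x) ∈ B) (hst : s ≤ t) : (t, x) ∈ B := by
  simpa using hB s x h (t - s) (sub_nonneg.2 hst)

lemma mem_earlierSection {Q R : Set (ℝ × ℝ)} (hR : IsClosed R) (hQf : ForwardClosed Q)
    {s x : ℝ} (hQ : (s, x) ∈ Q) (hsR : (s, x) ∉ R) : x ∈ earlierSection Q R := by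
  have hopen : IsOpen {t : ℝ | (t, x) ∉ R} :=
    hR.isOpen_compl.preimage (by fun_prop : Continuous fun t : ℝ => (t, x))
  obtain ⟨ε, hε, hball⟩ := Metric.isOpen_iff.1 hopen s hsR
  obtain ⟨t, hst, htε⟩ := exists_rat_btwn (show s < s + ε by linarith)
  refine Set.mem_iUnion.2 ⟨t, hQf.mem_of_le hQ hst.le, hball ?_⟩
  rw [Metric.mem_ball, Real.dist_eq, abs_lt]
  constructor <;> linarith

/-- At a level of `earlierSection Q R`, every point of `R` lies in `Q`. -/
lemma mem_left_of_mem_earlierSection {Q R : Set (ℝ × ℝ)} (hQf : ForwardClosed Q)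
    (hRf : ForwardClosed R) {s x : ℝ} (hx : x ∈ earlierSection Q R) (hs : (s, x) ∈ R) :
    (s, x) ∈ Q := by
  obtain ⟨t, htQ, htR⟩ := Set.mem_iUnion.1 hx
  rcases le_total s t with h | h
  · exact absurd (hRf.mem_of_le hs h) htR
  · exact hQf.mem_of_le htQ h

section HitTime

variable {Ω : Type*} {B : Set (ℝ × ℝ)} {Y : ℝ → Ω → ℝ} {ω : Ω}

lemma bddBelow_hit : BddBelow {t : ℝ | 0 ≤ t ∧ (t, Y t ω) ∈ B} := ⟨0, fun _ h => h.1⟩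

lemma hitTime_le {t : ℝ} (ht : 0 ≤ t) (h : (t, Y t ω) ∈ B) : hitTime B Y ω ≤ t :=
  csInf_le bddBelow_hit ⟨ht, h⟩

lemma hitTime_mem (hB : IsClosed B) (hY : Continuous fun t => Y t ω)
    (hne : ∃ t : ℝ, 0 ≤ t ∧ (t, Y t ω) ∈ B) :
    0 ≤ hitTime B Y ω ∧ (hitTime B Y ω, Y (hitTime B Y ω) ω) ∈ B := by
  have hcl : IsClosed {t : ℝ | 0 ≤ t ∧ (t, Y t ω) ∈ B} :=
    isClosed_Ici.inter (hB.preimage (by fun_prop : Continuous fun t : ℝ => (t, Y t ω)))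
  exact hcl.csInf_mem hne bddBelow_hit

lemma hitTime_union {C : Set (ℝ × ℝ)} (hB : ∃ t : ℝ, 0 ≤ t ∧ (t, Y t ω) ∈ B)
    (hC : ∃ t : ℝ, 0 ≤ t ∧ (t, Y t ω) ∈ C) :
    hitTime (B ∪ C) Y ω = min (hitTime B Y ω) (hitTime C Y ω) := by
  unfold hitTime
  rw [← csInf_union bddBelow_hit hB bddBelow_hit hC]
  congr 1
  ext t
  simp only [Set.mem_ofPred_eq, Set.mem_union, and_or_left]

end HitTime

/-- If `f` and `g` have law `ν` and a.s. visit `A` simultaneously, then a variable equal to `f` where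
`f ∈ A` and to `g` elsewhere has law `ν` as well. -/
lemma map_eq_of_glue {Ω : Type*} [MeasurableSpace Ω] {P : Measure Ω} {ν : Measure ℝ}
    {f g h : Ω → ℝ} (hf : Measurable f) (hg : Measurable g) (hh : Measurable h)
    (hfν : Measure.map f P = ν) (hgν : Measure.map g P = ν)
    {A : Set ℝ} (hA : MeasurableSet A) (hfg : ∀ᵐ ω ∂P, f ω ∈ A ↔ g ω ∈ A)
    (h₁ : ∀ᵐ ω ∂P, f ω ∈ A → h ω = f ω) (h₂ : ∀ᵐ ω ∂P, f ω ∉ A → h ω = g ω) :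
    Measure.map h P = ν := by
  ext S hS
  rw [Measure.map_apply hh hS, ← measure_inter_add_sdiff (h ⁻¹' S) (hf hA),
    ← measure_inter_add_sdiff S hA]
  congr 1
  · rw [← hfν, Measure.map_apply hf (hS.inter hA)]
    refine measure_congr (Filter.eventuallyEq_set.2 ?_)
    filter_upwards [h₁] with ω h1
    simp only [Set.mem_inter_iff, Set.mem_preimage]
    exact and_congr_left fun hω => by rw [h1 hω]
  · rw [← hgν, Measure.map_apply hg (hS.diff hA)]
    refine measure_congr (Filter.eventuallyEq_set.2 ?_)
    filter_upwards [h₂, hfg] with ω h2 hω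
    simp only [Set.mem_sdiff, Set.mem_preimage, ← hω]
    exact and_congr_left fun hn => by rw [h2 hn]

theorem stmt_12 {Ω : Type*} [MeasurableSpace Ω]
    (ℙ : Measure Ω) [IsProbabilityMeasure ℙ]
    (ν : Measure ℝ) [IsProbabilityMeasure ν]
    (Y : ℝ → Ω → ℝ)
    (hYmeas : Measurable fun p : ℝ × Ω => Y p.1 p.2)
    (hYcont : ∀ ω, Continuous fun t => Y t ω)
    (Q R : Set (ℝ × ℝ))
    (hQsub : Q ⊆ Set.Ici 0 ×ˢ Set.univ) (hRsub : R ⊆ Set.Ici 0 ×ˢ Set.univ)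
    (hQcl : IsClosed Q) (hRcl : IsClosed R)
    (hQfwd : ForwardClosed Q) (hRfwd : ForwardClosed R)
    (hτQmeas : Measurable (hitTime Q Y)) (hτRmeas : Measurable (hitTime R Y))
    -- the hitting times are a.s. finite
    (hQfin : ∀ᵐ ω ∂ℙ, ∃ t : ℝ, 0 ≤ t ∧ (t, Y t ω) ∈ Q)
    (hRfin : ∀ᵐ ω ∂ℙ, ∃ t : ℝ, 0 ≤ t ∧ (t, Y t ω) ∈ R)
    -- both stopped values have law ν
    (hlawQ : Measure.map (fun ω => Y (hitTime Q Y ω) ω) ℙ = ν)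
    (hlawR : Measure.map (fun ω => Y (hitTime R Y ω) ω) ℙ = ν) :
    IsClosed (Q ∪ R) ∧ ForwardClosed (Q ∪ R) ∧
    IsClosed (Q ∩ R) ∧ ForwardClosed (Q ∩ R) ∧
    (∀ᵐ ω ∂ℙ, hitTime (Q ∪ R) Y ω = min (hitTime Q Y ω) (hitTime R Y ω)) ∧
    Measure.map (fun ω => Y (min (hitTime Q Y ω) (hitTime R Y ω)) ω) ℙ = ν ∧
    Measure.map (fun ω => Y (max (hitTime Q Y ω) (hitTime R Y ω)) ω) ℙ = ν := by
  have hm : ∀ {σ : Ω → ℝ}, Measurable σ → Measurable fun ω => Y (σ ω) ω :=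
    fun hσ => hYmeas.comp (hσ.prodMk measurable_id)
  have hA := measurableSet_earlierSection hQcl hRcl
  set A := earlierSection Q R
  have hlt : ∀ᵐ ω ∂ℙ, hitTime Q Y ω < hitTime R Y ω → Y (hitTime Q Y ω) ω ∈ A := by
    filter_upwards [hQfin] with ω hQω hab
    obtain ⟨ha0, ha⟩ := hitTime_mem hQcl (hYcont ω) hQω
    exact mem_earlierSection hRcl hQfwd ha fun h => (hitTime_le ha0 h).not_gt hab
  have hle : ∀ᵐ ω ∂ℙ, Y (hitTime R Y ω) ω ∈ A → hitTime Q Y ω ≤ hitTime R Y ω := by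
    filter_upwards [hRfin] with ω hRω hω
    obtain ⟨hb0, hb⟩ := hitTime_mem hRcl (hYcont ω) hRω
    exact hitTime_le hb0 (mem_left_of_mem_earlierSection hQfwd hRfwd hω hb)
  have hsub : ∀ᵐ ω ∂ℙ, Y (hitTime R Y ω) ω ∈ A → Y (hitTime Q Y ω) ω ∈ A := by
    filter_upwards [hlt, hle] with ω h1 h2 hω
    rcases (h2 hω).lt_or_eq with h | h
    · exact h1 h
    · rwa [h]
  -- The inclusion of events is an a.s. equality, as both have the finite measure `ν A`.
  have hiff : ∀ᵐ ω ∂ℙ, Y (hitTime Q Y ω) ω ∈ A ↔ Y (hitTime R Y ω) ω ∈ A := by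
    have heq : ((fun ω => Y (hitTime R Y ω) ω) ⁻¹' A : Set Ω) =ᵐ[ℙ]
        ((fun ω => Y (hitTime Q Y ω) ω) ⁻¹' A : Set Ω) := by
      refine ae_eq_of_ae_subset_of_measure_ge hsub ?_
        (hm hτRmeas hA).nullMeasurableSet (measure_ne_top _ _)
      rw [← Measure.map_apply (hm hτQmeas) hA, ← Measure.map_apply (hm hτRmeas) hA,
        hlawQ, hlawR]
    filter_upwards [Filter.eventuallyEq_set.1 heq] with ω hω
    exact hω.symm
  refine ⟨hQcl.union hRcl, ?_, hQcl.inter hRcl, ?_, ?_, ?_, ?_⟩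
  · exact fun t x h r hr => h.imp (hQfwd t x · r hr) (hRfwd t x · r hr)
  · exact fun t x h r hr => ⟨hQfwd t x h.1 r hr, hRfwd t x h.2 r hr⟩
  · filter_upwards [hQfin, hRfin] with ω h1 h2 using hitTime_union h1 h2
  · refine map_eq_of_glue (hm hτQmeas) (hm hτRmeas) (hm (hτQmeas.min hτRmeas))
      hlawQ hlawR hA hiff ?_ ?_
    · filter_upwards [hle, hiff] with ω h1 h2 hω
      rw [min_eq_left (h1 (h2.1 hω))]
    · filter_upwards [hlt] with ω h1 hω
      rw [min_eq_right (not_lt.1 (mt h1 hω))]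
  · refine map_eq_of_glue (hm hτRmeas) (hm hτQmeas) (hm (hτQmeas.max hτRmeas))
      hlawR hlawQ hA (hiff.mono fun _ h => h.symm) ?_ ?_
    · filter_upwards [hle] with ω h1 hω
      rw [max_eq_right (h1 hω)]
    · filter_upwards [hlt, hiff] with ω h1 h2 hω
      rw [max_eq_left (not_lt.1 (mt h1 (mt h2.1 hω)))]
end

section
/- Let T ∈ (0,∞), δ ∈ (0,1], let h ∈ C(ℝ,ℝ) satisfy |h(x)| ≤ c₀(1+|x|), and let σ ∈ C([0,T] × ℝ, ℝ) be Lipschitz in space uniformly in time. Let u be an upper semicontinuous viscosity subsolution and v a lower semicontinuous viscosity supersolution on (0,T) × ℝ of the obstacle problem min(w(t,x) − h(x), ∂_t w − (σ(t,x)²/2) Δw) = 0, with u(t,x), −v(t,x) ≤ C(1+|x|) on [0,T) × ℝ and u(0,·), v(0,·) δ-Hölder continuous. If u(0,x) ≤ v(0,x) for all x ∈ ℝ, then u(t,x) ≤ v(t,x) for all (t,x) ∈ [0,T) × ℝ. -/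
/-!
The proof doubles variables and uses a parabolic theorem on sums.

Suppose `u > v` somewhere. Subtracting the penalty `κ (1 + x ^ 2) exp (S t) / (T - t)` from `u` and
from `-v`, with `κ` small, keeps the sum positive somewhere. Because of linear growth, the penalty
confines everything to a compact set `Q` away from time `T` (`exists_localisation`), and because
`σ ^ 2` grows at most quadratically, it makes the sub- and supersolution inequalities strict by
`κ / T ^ 2` (`strict_of_penalised`).

The theorem on sums `exists_superjets` works with the sup-convolutions `f₁`, `f₂` of the penalised
functions over `Q`. At a maximum of `f₁ ξ + f₂ η - coupling` minus a small linear form, both `f₁`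
and `f₂` are touched by paraboloids from above and from below. On the set `C11Set` of such points
the derivative is Lipschitz (`lipschitzOn_fderiv_C11Set`), which serves twice. It makes the
derivative differentiable relative to that set almost everywhere, by Rademacher's theorem; as the
distance to the set is also differentiable almost everywhere, hence has zero derivative at almost
every point of the set, this yields a second-order Taylor expansion (`ae_taylor_C11Set`), in place
of Alexandrov's theorem. And since Lipschitz maps send null sets to null sets, the small linear
form can be chosen so that the maximum is a point with such expansions (Jensen's lemma,
`exists_max_notMem_null`). Second-order expansions of the sup-convolutions are parabolic superjets
of the penalised functions at the points which realise the suprema.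

In the comparison the space weight `α` is chosen first and the time weight `β` afterwards, large
enough that the variation of `σ` in time is negligible even when multiplied by `α`. Upper
semicontinuity near the diagonal makes `α (x₁ - x₂) ^ 2` small, keeps the two points away from
time `0`, where `u ≤ v`, and, as `v ≥ h`, keeps `u` above the obstacle. So the parabolic
inequalities hold for both functions, and their sum contradicts the strictness
(`false_of_jets`).
-/

open scoped ENNReal

/-- Parabolic superjet `P^{2,+} w (t,x)` relative to `D`. -/
def ParabolicSuperjet (D : Set (ℝ × ℝ)) (w : ℝ × ℝ → ℝ) (t x a p m : ℝ) : Prop :=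
  ∀ ε > (0 : ℝ), ∃ δ > (0 : ℝ), ∀ s y : ℝ, (s, y) ∈ D → |s - t| + |y - x| < δ →
    w (s, y) ≤ w (t, x) + a * (s - t) + p * (y - x) + m / 2 * (y - x) ^ 2
      + ε * (|s - t| + (y - x) ^ 2)

/-- Parabolic subjet `P^{2,-} w (t,x)` relative to `D`. -/
def ParabolicSubjet (D : Set (ℝ × ℝ)) (w : ℝ × ℝ → ℝ) (t x a p m : ℝ) : Prop :=
  ∀ ε > (0 : ℝ), ∃ δ > (0 : ℝ), ∀ s y : ℝ, (s, y) ∈ D → |s - t| + |y - x| < δ →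
    w (s, y) ≥ w (t, x) + a * (s - t) + p * (y - x) + m / 2 * (y - x) ^ 2
      - ε * (|s - t| + (y - x) ^ 2)

/-! ### Second-order differentiability on the set of two-sided quadratic contact -/

section Alexandrov

variable {E : Type*} [NormedAddCommGroup E] [NormedSpace ℝ E]

/-- The set of points at which `f` stays within `C ‖b - a‖ ^ 2` of an affine function, globally in
`b`. The linear part is then necessarily the derivative of `f` at `a`. -/
def C11Set (f : E → ℝ) (C : ℝ) : Set E :=
  {a | ∀ b, |f b - f a - fderiv ℝ f a (b - a)| ≤ C * ‖b - a‖ ^ 2}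

lemma hasFDerivAt_of_quadratic {f : E → ℝ} {C : ℝ} {a : E} {l : E →L[ℝ] ℝ}
    (hl : ∀ b, |f b - f a - l (b - a)| ≤ C * ‖b - a‖ ^ 2) : HasFDerivAt f l a := by
  rw [hasFDerivAt_iff_isLittleO]
  have h1 : (fun b => f b - f a - l (b - a)) =O[nhds a] fun b => ‖b - a‖ ^ 2 := by
    refine Asymptotics.IsBigO.of_bound C (Filter.Eventually.of_forall fun b => ?_)
    simpa using hl b
  exact h1.trans_isLittleO (Asymptotics.isLittleO_pow_sub_sub a one_lt_two)

/-- A function touched at `a` by a paraboloid from below and one from above belongs to `C11Set`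
at `a`, and both paraboloids have the derivative of `f` as linear part. -/
lemma mem_C11Set_of_touch {f : E → ℝ} {C : ℝ} {a : E} {l₁ l₂ : E →L[ℝ] ℝ}
    (h₁ : ∀ b, f a + l₁ (b - a) - C * ‖b - a‖ ^ 2 ≤ f b)
    (h₂ : ∀ b, f b ≤ f a + l₂ (b - a) + C * ‖b - a‖ ^ 2) :
    a ∈ C11Set f C ∧ fderiv ℝ f a = l₂ := by
  have key : ∀ k : E, l₁ k ≤ l₂ k := by
    intro k
    have hs : ∀ s : ℝ, 0 < s → l₁ k - l₂ k ≤ s * (2 * C * ‖k‖ ^ 2) := by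
      intro s hs
      have e1 := (h₁ (a + s • k)).trans (h₂ (a + s • k))
      simp only [add_sub_cancel_left, map_smul, smul_eq_mul, norm_smul, Real.norm_eq_abs,
        abs_of_pos hs] at e1
      have : s * (l₁ k - l₂ k) ≤ s * (s * (2 * C * ‖k‖ ^ 2)) := by nlinarith
      exact le_of_mul_le_mul_left this hs
    have hlim : Filter.Tendsto (fun s : ℝ => s * (2 * C * ‖k‖ ^ 2)) (nhdsWithin 0 (Set.Ioi 0))
        (nhds 0) := by
      have : Filter.Tendsto (fun s : ℝ => s * (2 * C * ‖k‖ ^ 2)) (nhds 0)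
          (nhds (0 * (2 * C * ‖k‖ ^ 2))) := Filter.tendsto_id.mul_const _
      rw [zero_mul] at this
      exact this.mono_left nhdsWithin_le_nhds
    have := ge_of_tendsto hlim (by
      filter_upwards [self_mem_nhdsWithin] with s hs' using hs s hs')
    linarith
  have heq : l₁ = l₂ := by
    ext k
    refine le_antisymm (key k) ?_
    have := key (-k)
    simp only [map_neg] at this
    linarith
  subst heq
  have hb : ∀ b, |f b - f a - l₁ (b - a)| ≤ C * ‖b - a‖ ^ 2 := by
    intro b
    rw [abs_le]
    constructor <;> linarith [h₁ b, h₂ b]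
  have hd := (hasFDerivAt_of_quadratic hb).fderiv
  refine ⟨?_, hd⟩
  intro b
  rw [hd]
  exact hb b

lemma lipschitzOn_fderiv_C11Set (f : E → ℝ) {C : ℝ} (hC : 0 ≤ C) :
    LipschitzOnWith (Real.toNNReal (6 * C)) (fderiv ℝ f) (C11Set f C) := by
  refine LipschitzOnWith.of_dist_le_mul fun a ha b hb => ?_
  rw [Real.coe_toNNReal _ (by positivity), dist_eq_norm, dist_eq_norm]
  rcases eq_or_ne a b with rfl | hab
  · simp
  have hpos : 0 < ‖a - b‖ := norm_pos_iff.2 (sub_ne_zero.2 hab)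
  -- vectors of length `‖a - b‖` give the sharp comparison of the two affine approximations
  refine ContinuousLinearMap.opNorm_le_of_unit_norm (by positivity) fun x hx => ?_
  set D := ‖a - b‖ with hD
  have hk : ‖D • x‖ = D := by rw [norm_smul, hx, mul_one, Real.norm_eq_abs, abs_of_pos hpos]
  have e1 := ha (a + D • x)
  have e2 := hb (a + D • x)
  have e3 := hb a
  rw [add_sub_cancel_left, hk] at e1
  have e4 : ‖a + D • x - b‖ ≤ 2 * D := by
    calc ‖a + D • x - b‖ = ‖(a - b) + D • x‖ := by congr 1; abel
      _ ≤ ‖a - b‖ + ‖D • x‖ := norm_add_le _ _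
      _ = 2 * D := by rw [hk]; ring
  have e5 : ‖a + D • x - b‖ ^ 2 ≤ 4 * D ^ 2 := by
    nlinarith [norm_nonneg (a + D • x - b)]
  have e6 : fderiv ℝ f b (a + D • x - b) = fderiv ℝ f b (a - b) + D * fderiv ℝ f b x := by
    rw [show a + D • x - b = (a - b) + D • x by abel, map_add, map_smul, smul_eq_mul]
  rw [e6] at e2
  rw [map_smul, smul_eq_mul] at e1
  have e7 := mul_le_mul_of_nonneg_left e5 hC
  rw [abs_le] at e1 e2 e3
  rw [sub_apply, Real.norm_eq_abs]
  have e8 : D * |fderiv ℝ f a x - fderiv ℝ f b x| ≤ D * (6 * C * D) := by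
    rw [← abs_of_pos hpos, ← abs_mul, abs_of_pos hpos, abs_le]
    constructor <;> nlinarith
  exact le_of_mul_le_mul_left e8 hpos

variable [FiniteDimensional ℝ E]

/-- Almost every point of `C11Set f C` carries a second-order Taylor expansion of `f`. On that set
`fderiv ℝ f` is Lipschitz, hence almost everywhere differentiable relative to the set; along the
segment from `a` to `a + k` the increments of `f` are compared with the derivatives at nearby points
of the set. -/
lemma ae_taylor_C11Set [MeasurableSpace E] [BorelSpace E] (μ : MeasureTheory.Measure E)
    [μ.IsAddHaarMeasure] (f : E → ℝ) {C : ℝ} (hC : 0 ≤ C) :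
    ∀ᵐ a ∂μ, a ∈ C11Set f C → ∃ A : E →L[ℝ] E →L[ℝ] ℝ, ∀ ε > 0, ∃ ρ > 0, ∀ k : E, ‖k‖ < ρ →
      |f (a + k) - f a - fderiv ℝ f a k - 1 / 2 * A k k| ≤ ε * ‖k‖ ^ 2 := by
  have hd := (lipschitzOn_fderiv_C11Set f hC).ae_differentiableWithinAt_of_mem (μ := μ)
  have hi := (Metric.lipschitz_infDist_pt (C11Set f C)).ae_differentiableAt (μ := μ)
  filter_upwards [hd, hi] with a ha1 ha2 haG
  set G := C11Set f C
  -- the distance to `G` is minimal at `a`, so its derivative vanishes there: `G` is dense near `a`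
  -- at the scale of the distance to `a`
  have hnear : ∀ η > (0 : ℝ), ∃ ρ > 0, ∀ k : E, ‖k‖ < ρ → Metric.infDist (a + k) G ≤ η * ‖k‖ := by
    intro η hη
    have h0 : Metric.infDist a G = 0 := Metric.infDist_zero_of_mem haG
    have hmin : IsLocalMin (fun y => Metric.infDist y G) a :=
      Filter.Eventually.of_forall fun y => by simpa [h0] using Metric.infDist_nonneg
    have hz := ha2.hasFDerivAt
    rw [hmin.fderiv_eq_zero, hasFDerivAt_iff_isLittleO_nhds_zero] at hz
    obtain ⟨ρ, hρ, hb⟩ := Metric.eventually_nhds_iff.1 (hz.def hη)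
    refine ⟨ρ, hρ, fun k hk => ?_⟩
    have := hb (y := k) (by simpa using hk)
    simpa [h0, abs_of_nonneg Metric.infDist_nonneg] using this
  obtain ⟨A, hA⟩ := ha1 haG
  refine ⟨A, fun ε hε => ?_⟩
  -- `N` is the number of steps in which the segment from `a` to `a + k` is walked through
  obtain ⟨N, hN⟩ := exists_nat_gt (max 1 ((5 * C + 2 * ‖A‖ + 2) / ε))
  have hN1 : (1 : ℝ) < N := (le_max_left _ _).trans_lt hN
  have hN0 : (0 : ℝ) < N := by linarith
  have hNε : (5 * C + 2 * ‖A‖ + 2) / N ≤ ε := by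
    rw [div_le_iff₀ hN0, mul_comm ε, ← div_le_iff₀ hε]
    exact ((le_max_right _ _).trans_lt hN).le
  obtain ⟨ρ₁, hρ₁, hn⟩ := hnear (1 / (2 * N)) (by positivity)
  have hA' := hA.isLittleO.def (show (0 : ℝ) < 1 / N by positivity)
  rw [eventually_nhdsWithin_iff, Metric.eventually_nhds_iff] at hA'
  obtain ⟨ρ₂, hρ₂, hd'⟩ := hA'
  refine ⟨min ρ₁ (ρ₂ / 2), by positivity, fun k hk => ?_⟩
  rcases eq_or_ne k 0 with rfl | hk0
  · simp
  have hkpos : 0 < ‖k‖ := norm_pos_iff.2 hk0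
  have hk1 : ‖k‖ < ρ₁ := hk.trans_le (min_le_left _ _)
  have hk2 : ‖k‖ < ρ₂ / 2 := hk.trans_le (min_le_right _ _)
  have hstep : ∀ j : ℕ, j < N → |f (a + ((j + 1 : ℝ) / N) • k) - f (a + ((j : ℝ) / N) • k)
      - (1 / N * fderiv ℝ f a k + j / N ^ 2 * A k k)| ≤ (5 * C + ‖A‖ + 2) / N ^ 2 * ‖k‖ ^ 2 := by
    intro j hj
    have hjN : (j : ℝ) / N ≤ 1 := by
      rw [div_le_one hN0]; exact_mod_cast hj.le
    have hj0 : (0 : ℝ) ≤ (j : ℝ) / N := by positivity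
    have hnk : ‖((j : ℝ) / N) • k‖ ≤ ‖k‖ := by
      rw [norm_smul, Real.norm_eq_abs, abs_of_nonneg hj0]
      nlinarith
    have hid := hn (((j : ℝ) / N) • k) (hnk.trans_lt hk1)
    have hid' : Metric.infDist (a + ((j : ℝ) / N) • k) G < 1 / N * ‖k‖ := by
      refine hid.trans_lt ?_
      have : 1 / (2 * (N : ℝ)) * ‖((j : ℝ) / N) • k‖ ≤ 1 / (2 * N) * ‖k‖ := by gcongr
      refine this.trans_lt ?_
      have h2 : 1 / (2 * (N : ℝ)) = 1 / N / 2 := by field_simp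
      rw [h2]
      have : 0 < 1 / (N : ℝ) * ‖k‖ := by positivity
      linarith
    obtain ⟨y, hyG, hy⟩ := (Metric.infDist_lt_iff ⟨a, haG⟩).1 hid'
    rw [dist_eq_norm] at hy
    set b := a + ((j : ℝ) / N) • k with hb
    have hc : a + ((j + 1 : ℝ) / N) • k = b + (1 / N : ℝ) • k := by
      rw [hb, add_assoc, ← add_smul]; congr 2; ring
    rw [hc]
    set n : ℝ := 1 / N with hn_def
    have hn0 : 0 < n := by positivity
    have hn1 : n ≤ 1 := by rw [hn_def, div_le_one hN0]; exact hN1.le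
    have q1 := hyG b
    have q2 := hyG (b + n • k)
    have q3 : ‖b + n • k - y‖ ≤ 2 * (n * ‖k‖) := by
      calc ‖b + n • k - y‖ = ‖(b - y) + n • k‖ := by congr 1; abel
        _ ≤ ‖b - y‖ + ‖n • k‖ := norm_add_le _ _
        _ ≤ n * ‖k‖ + n * ‖k‖ := by
          rw [norm_smul, Real.norm_eq_abs, abs_of_pos hn0]; gcongr
        _ = _ := by ring
    have q4 : fderiv ℝ f y (b + n • k - y) = fderiv ℝ f y (b - y) + n * fderiv ℝ f y k := by
      rw [show b + n • k - y = (b - y) + n • k by abel, map_add, map_smul, smul_eq_mul]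
    rw [q4] at q2
    have q5 : C * ‖b + n • k - y‖ ^ 2 ≤ C * (2 * (n * ‖k‖)) ^ 2 := by gcongr
    have q6 : C * ‖b - y‖ ^ 2 ≤ C * (n * ‖k‖) ^ 2 := by gcongr
    have hya : ‖y - a‖ ≤ 2 * ‖k‖ := by
      calc ‖y - a‖ = ‖((j : ℝ) / N) • k - (b - y)‖ := by rw [hb]; congr 1; abel
        _ ≤ ‖((j : ℝ) / N) • k‖ + ‖b - y‖ := norm_sub_le _ _
        _ ≤ ‖k‖ + 1 * ‖k‖ := by
          gcongr
          exact hy.le.trans (by gcongr)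
        _ = _ := by ring
    have q7 := hd' (y := y) (by rw [dist_eq_norm]; linarith) hyG
    -- `fderiv f y k` differs from its linearisation at `a` by two controlled terms
    have q8 : |(fderiv ℝ f y - fderiv ℝ f a - A (y - a)) k| ≤ n * (2 * ‖k‖) * ‖k‖ := by
      rw [← Real.norm_eq_abs]
      refine (ContinuousLinearMap.le_opNorm _ _).trans ?_
      gcongr
      exact q7.trans (by gcongr)
    have q9 : |A (b - y) k| ≤ ‖A‖ * (n * ‖k‖) * ‖k‖ := by
      rw [← Real.norm_eq_abs]
      refine (ContinuousLinearMap.le_opNorm _ _).trans ?_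
      gcongr
      exact (ContinuousLinearMap.le_opNorm _ _).trans (by gcongr)
    have q10 : A (y - a) k = (j * n) * A k k - A (b - y) k := by
      rw [show y - a = ((j : ℝ) / N) • k - (b - y) by rw [hb]; abel]
      simp only [map_sub, map_smul, sub_apply, smul_apply,
        smul_eq_mul, hn_def]
      ring
    simp only [sub_apply] at q8
    rw [q10] at q8
    have r1 : (j : ℝ) / N ^ 2 = j * n ^ 2 := by rw [hn_def]; field_simp
    have r2 : (5 * C + ‖A‖ + 2) / N ^ 2 = (5 * C + ‖A‖ + 2) * n ^ 2 := by rw [hn_def]; field_simp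
    rw [r1, r2]
    have hs : f (b + n • k) - f b - (n * fderiv ℝ f a k + j * n ^ 2 * A k k)
        = (f (b + n • k) - f y - (fderiv ℝ f y (b - y) + n * fderiv ℝ f y k))
          - (f b - f y - fderiv ℝ f y (b - y))
          + n * (fderiv ℝ f y k - fderiv ℝ f a k - (j * n * A k k - A (b - y) k))
          - n * A (b - y) k := by ring
    rw [abs_le] at q1 q2 q8 q9
    have q8' := mul_le_mul_of_nonneg_left q8.1 hn0.le
    have q8'' := mul_le_mul_of_nonneg_left q8.2 hn0.le
    have q9' := mul_le_mul_of_nonneg_left q9.1 hn0.le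
    have q9'' := mul_le_mul_of_nonneg_left q9.2 hn0.le
    rw [hs, abs_le]
    constructor <;> linarith
  have hsum : ∀ j : ℕ, j ≤ N → |f (a + ((j : ℝ) / N) • k) - f a - (j / N * fderiv ℝ f a k
      + (j * (j - 1) / 2) / N ^ 2 * A k k)| ≤ j * ((5 * C + ‖A‖ + 2) / N ^ 2 * ‖k‖ ^ 2) := by
    intro j
    induction j with
    | zero => simp
    | succ j ih =>
      intro hj
      have i1 := ih (by omega)
      have i2 := hstep j (by omega)
      push_cast
      have e : f (a + ((j + 1 : ℝ) / N) • k) - f a - ((j + 1) / N * fderiv ℝ f a k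
          + ((j + 1 : ℝ) * (j + 1 - 1) / 2) / N ^ 2 * A k k)
          = (f (a + ((j + 1 : ℝ) / N) • k) - f (a + ((j : ℝ) / N) • k)
              - (1 / N * fderiv ℝ f a k + j / N ^ 2 * A k k))
            + (f (a + ((j : ℝ) / N) • k) - f a - (j / N * fderiv ℝ f a k
              + (j * (j - 1) / 2) / N ^ 2 * A k k)) := by ring
      rw [e]
      refine (abs_add_le _ _).trans ?_
      linarith
  have hfin := hsum N le_rfl
  rw [div_self hN0.ne', one_smul, one_mul] at hfin
  have hAkk : |A k k| ≤ ‖A‖ * ‖k‖ ^ 2 := by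
    rw [← Real.norm_eq_abs, sq, ← mul_assoc]
    exact A.le_opNorm₂ k k
  have hcoef : ((N : ℝ) * (N - 1) / 2) / N ^ 2 = 1 / 2 - 1 / (2 * N) := by field_simp
  have e : f (a + k) - f a - fderiv ℝ f a k - 1 / 2 * A k k
      = (f (a + k) - f a - (fderiv ℝ f a k + ((N : ℝ) * (N - 1) / 2) / N ^ 2 * A k k))
        + (-(1 / (2 * N)) * A k k) := by rw [hcoef]; ring
  rw [e]
  refine (abs_add_le _ _).trans ?_
  rw [abs_mul, abs_neg, abs_of_pos (show (0 : ℝ) < 1 / (2 * N) by positivity)]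
  calc _ ≤ N * ((5 * C + ‖A‖ + 2) / N ^ 2 * ‖k‖ ^ 2) + 1 / (2 * N) * (‖A‖ * ‖k‖ ^ 2) := by gcongr
    _ = (5 * C + (3 / 2) * ‖A‖ + 2) / N * ‖k‖ ^ 2 := by field_simp; ring
    _ ≤ (5 * C + 2 * ‖A‖ + 2) / N * ‖k‖ ^ 2 := by
      gcongr
      norm_num
    _ ≤ ε * ‖k‖ ^ 2 := by gcongr

/-- Jensen's lemma: if every small slope `p` is the slope of `W` at a point where `W - p` is
maximal and where `W` has quadratic contact, these points cannot all lie in a null set, since the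
derivative of `W` is Lipschitz on them and takes all small values. -/
lemma exists_max_notMem_null [MeasurableSpace E] [BorelSpace E] (μ : MeasureTheory.Measure E)
    [μ.IsAddHaarMeasure] (W : E → ℝ) {C r : ℝ} (hC : 0 ≤ C) (hr : 0 < r) (B : Set E) (hB : μ B = 0)
    (hW : ∀ p : E →L[ℝ] ℝ, ‖p‖ < r → ∃ ζ ∈ C11Set W C, fderiv ℝ W ζ = p ∧
      ∀ ζ', W ζ' - p ζ' ≤ W ζ - p ζ) :
    ∃ p : E →L[ℝ] ℝ, ‖p‖ < r ∧ ∃ ζ, ζ ∉ B ∧ ∀ ζ', W ζ' - p ζ' ≤ W ζ - p ζ := by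
  by_contra! hcon
  have hsub : Metric.ball (0 : E →L[ℝ] ℝ) r ⊆ fderiv ℝ W '' (C11Set W C ∩ B) := by
    intro p hp
    have hp' : ‖p‖ < r := by simpa using hp
    obtain ⟨ζ, hζ, hd, hmax⟩ := hW p hp'
    refine ⟨ζ, ⟨hζ, ?_⟩, hd⟩
    by_contra hn
    obtain ⟨ζ', h'⟩ := hcon p hp' ζ hn
    exact absurd (hmax ζ') (not_le.2 h')
  have hfin : Module.finrank ℝ (E →L[ℝ] ℝ) = Module.finrank ℝ E := by
    rw [← LinearEquiv.finrank_eq (LinearMap.toContinuousLinearMap (𝕜 := ℝ) (E := E) (F' := ℝ))]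
    exact Subspace.dual_finrank_eq
  have hB' : MeasureTheory.Measure.hausdorffMeasure (Module.finrank ℝ E : ℝ) (C11Set W C ∩ B) = 0 :=
    MeasureTheory.measure_mono_null Set.inter_subset_right
      (MeasureTheory.Measure.absolutelyContinuous_isAddHaarMeasure _ μ hB)
  have himg := ((lipschitzOn_fderiv_C11Set W hC).mono
    (Set.inter_subset_left (t := B))).hausdorffMeasure_image_le
      (d := (Module.finrank ℝ E : ℝ)) (by positivity)
  rw [hB', mul_zero] at himg
  have hball : MeasureTheory.Measure.hausdorffMeasure (Module.finrank ℝ E : ℝ)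
      (Metric.ball (0 : E →L[ℝ] ℝ) r) = 0 :=
    le_antisymm ((MeasureTheory.measure_mono hsub).trans himg) bot_le
  rw [← hfin] at hball
  exact (Metric.measure_ball_pos _ _ hr).ne' hball

end Alexandrov

/-! ### Sup-convolutions and the theorem on sums -/

/-- The quadratic kernel of the sup-convolutions, with weight `β` in time and `α` in space. -/
def supKernel (α β : ℝ) (z : ℝ × ℝ) : ℝ := 2 * β * z.1 ^ 2 + 2 * α * z.2 ^ 2

/-- The quadratic coupling of the two space-time points. -/
def coupling (α β : ℝ) (ζ : (ℝ × ℝ) × (ℝ × ℝ)) : ℝ :=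
  β * (ζ.1.1 - ζ.2.1) ^ 2 + α * (ζ.1.2 - ζ.2.2) ^ 2

/-- `f` is the sup-convolution of `g` over `Q`: the supremum over `z ∈ Q` of
`g z - supKernel α β (ξ - z)`, which is required to be attained. -/
def IsSupConv (α β : ℝ) (Q : Set (ℝ × ℝ)) (g f : ℝ × ℝ → ℝ) : Prop :=
  (∀ ξ, ∃ z ∈ Q, f ξ = g z - supKernel α β (ξ - z)) ∧
    ∀ ξ, ∀ z ∈ Q, g z - supKernel α β (ξ - z) ≤ f ξ

/-- The linear form `(t, x) ↦ c * t + d * x`. -/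
noncomputable def linForm (c d : ℝ) : ℝ × ℝ →L[ℝ] ℝ :=
  c • ContinuousLinearMap.fst ℝ ℝ ℝ + d • ContinuousLinearMap.snd ℝ ℝ ℝ

lemma linForm_apply (c d : ℝ) (z : ℝ × ℝ) : linForm c d z = c * z.1 + d * z.2 := by
  simp [linForm]

lemma sq_fst_le (z : ℝ × ℝ) : z.1 ^ 2 ≤ ‖z‖ ^ 2 := by
  rw [← sq_abs z.1]
  exact pow_le_pow_left₀ (abs_nonneg _) (norm_fst_le z) 2

lemma sq_snd_le (z : ℝ × ℝ) : z.2 ^ 2 ≤ ‖z‖ ^ 2 := by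
  rw [← sq_abs z.2]
  exact pow_le_pow_left₀ (abs_nonneg _) (norm_snd_le z) 2

lemma norm_sq_le_add (z : ℝ × ℝ) : ‖z‖ ^ 2 ≤ z.1 ^ 2 + z.2 ^ 2 := by
  rcases max_cases ‖z.1‖ ‖z.2‖ with h | h <;>
    rw [Prod.norm_def, h.1, Real.norm_eq_abs, sq_abs] <;> nlinarith [sq_nonneg z.1, sq_nonneg z.2]

lemma exists_isSupConv (α β : ℝ) {Q : Set (ℝ × ℝ)} (hQ : IsCompact Q) (hne : Q.Nonempty)
    {g : ℝ × ℝ → ℝ} (hg : UpperSemicontinuousOn g Q) : ∃ f, IsSupConv α β Q g f := by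
  have h : ∀ ξ, ∃ z ∈ Q, IsMaxOn (fun z => g z + -supKernel α β (ξ - z)) Q z := by
    intro ξ
    refine UpperSemicontinuousOn.exists_isMaxOn hne hQ (hg.add ?_)
    refine ContinuousOn.upperSemicontinuousOn (Continuous.continuousOn ?_)
    unfold supKernel
    fun_prop
  choose Z hZ hmax using h
  refine ⟨fun ξ => g (Z ξ) - supKernel α β (ξ - Z ξ), fun ξ => ⟨Z ξ, hZ ξ, rfl⟩, fun ξ z hz => ?_⟩
  have := hmax ξ hz
  simp only [Set.mem_ofPred_eq] at this
  linarith

lemma IsSupConv.lower_touch {α β : ℝ} (hα : 0 ≤ α) (hβ : 0 ≤ β) {Q : Set (ℝ × ℝ)}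
    {g f : ℝ × ℝ → ℝ} (hf : IsSupConv α β Q g f) (a : ℝ × ℝ) :
    ∃ l : ℝ × ℝ →L[ℝ] ℝ, ∀ b, f a + l (b - a) - 2 * (α + β) * ‖b - a‖ ^ 2 ≤ f b := by
  obtain ⟨z, hz, h⟩ := hf.1 a
  refine ⟨linForm (-(4 * β * (a.1 - z.1))) (-(4 * α * (a.2 - z.2))), fun b => ?_⟩
  have h2 := hf.2 b z hz
  have h3 := mul_le_mul_of_nonneg_left (sq_fst_le (b - a)) hβ
  have h4 := mul_le_mul_of_nonneg_left (sq_snd_le (b - a)) hα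
  rw [linForm_apply, h]
  simp only [supKernel, Prod.fst_sub, Prod.snd_sub] at *
  nlinarith

lemma IsSupConv.continuous {α β : ℝ} {Q : Set (ℝ × ℝ)}
    {g f : ℝ × ℝ → ℝ} (hf : IsSupConv α β Q g f) : Continuous f := by
  -- `f + supKernel` is a supremum of affine functions, hence convex
  have hconv : ConvexOn ℝ Set.univ (fun ξ => f ξ + supKernel α β ξ) := by
    refine ⟨convex_univ, fun x _ y _ a b ha hb hab => ?_⟩
    obtain ⟨z, hz, h⟩ := hf.1 (a • x + b • y)
    have h1 := mul_le_mul_of_nonneg_left (hf.2 x z hz) ha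
    have h2 := mul_le_mul_of_nonneg_left (hf.2 y z hz) hb
    have hb' : b = 1 - a := by linarith
    subst hb'
    simp only [smul_eq_mul]
    rw [h]
    simp only [supKernel, Prod.fst_sub, Prod.snd_sub, Prod.fst_add, Prod.snd_add, Prod.smul_fst,
      Prod.smul_snd, smul_eq_mul] at *
    nlinarith
  have hc := hconv.continuousOn isOpen_univ
  rw [continuousOn_univ] at hc
  have hk : Continuous (supKernel α β) := by unfold supKernel; fun_prop
  have : f = fun ξ => (f ξ + supKernel α β ξ) - supKernel α β ξ := by ext; ring
  rw [this]
  exact hc.sub hk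

lemma IsSupConv.upper_bound {α β : ℝ} {Q : Set (ℝ × ℝ)} {g f : ℝ × ℝ → ℝ} {γ D B : ℝ}
    (hγ : 0 ≤ γ) (hγα : γ ≤ α) (hγβ : γ ≤ β) (hD : ∀ z ∈ Q, ‖z‖ ≤ D) (hB : ∀ z ∈ Q, g z ≤ B)
    (hf : IsSupConv α β Q g f) (ξ : ℝ × ℝ) : f ξ ≤ B + 2 * γ * D ^ 2 - γ * ‖ξ‖ ^ 2 := by
  obtain ⟨z, hz, h⟩ := hf.1 ξ
  have h1 : γ * ‖ξ - z‖ ^ 2 ≤ γ * ((ξ - z).1 ^ 2 + (ξ - z).2 ^ 2) :=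
    mul_le_mul_of_nonneg_left (norm_sq_le_add _) hγ
  have h2 : ‖ξ‖ ≤ ‖ξ - z‖ + D := by
    calc ‖ξ‖ = ‖(ξ - z) + z‖ := by simp
      _ ≤ ‖ξ - z‖ + ‖z‖ := norm_add_le _ _
      _ ≤ _ := by gcongr; exact hD z hz
  have h3 : ‖ξ‖ ^ 2 ≤ 2 * ‖ξ - z‖ ^ 2 + 2 * D ^ 2 := by
    have : ‖ξ‖ ^ 2 ≤ (‖ξ - z‖ + D) ^ 2 := by gcongr
    nlinarith [sq_nonneg (‖ξ - z‖ - D)]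
  have h4 := mul_le_mul_of_nonneg_left h3 hγ
  have h5 := mul_le_mul_of_nonneg_right hγβ (sq_nonneg (ξ - z).1)
  have h6 := mul_le_mul_of_nonneg_right hγα (sq_nonneg (ξ - z).2)
  have h7 := hB z hz
  rw [h, supKernel]
  linarith

/-- A one-sided second-order expansion in space-time gives a parabolic superjet: the mixed and the
pure time second-order terms are `o(|s - t|)`. -/
lemma superjet_of_taylor {Q : Set (ℝ × ℝ)} {g : ℝ × ℝ → ℝ} {z : ℝ × ℝ} {D : ℝ × ℝ →L[ℝ] ℝ}
    {A : ℝ × ℝ →L[ℝ] ℝ × ℝ →L[ℝ] ℝ}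
    (h : ∀ ε > 0, ∃ ρ > 0, ∀ k : ℝ × ℝ, ‖k‖ < ρ → z + k ∈ Q →
      g (z + k) ≤ g z + D k + 1 / 2 * A k k + ε * ‖k‖ ^ 2) :
    ParabolicSuperjet Q g z.1 z.2 (D (1, 0)) (D (0, 1)) (A (0, 1) (0, 1)) := by
  intro ε hε
  obtain ⟨ρ, hρ, hk⟩ := h ε hε
  set c := |A (1, 0) (1, 0)| + |A (1, 0) (0, 1)| + |A (0, 1) (1, 0)| with hc
  have hc0 : 0 ≤ c := by positivity
  refine ⟨min ρ (min 1 (ε / (c + 1))) / 2, by positivity, fun s y hQ hsy => ?_⟩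
  set d := s - z.1 with hd
  set e := y - z.2 with he
  have hmem : (s, y) = z + (d, e) := by ext <;> simp [hd, he]
  have m1 : min ρ (min 1 (ε / (c + 1))) ≤ ρ := min_le_left _ _
  have m2 : min ρ (min 1 (ε / (c + 1))) ≤ 1 := (min_le_right _ _).trans (min_le_left _ _)
  have m3 : min ρ (min 1 (ε / (c + 1))) ≤ ε / (c + 1) := (min_le_right _ _).trans (min_le_right _ _)
  have hd0 := abs_nonneg d
  have he0 := abs_nonneg e
  have hnorm : ‖(d, e)‖ < ρ := by
    rw [Prod.norm_def]
    simp only [Real.norm_eq_abs]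
    exact max_lt (by linarith) (by linarith)
  have := hk (d, e) hnorm (hmem ▸ hQ)
  rw [← hmem] at this
  have hdec : ((d, e) : ℝ × ℝ) = d • (1, 0) + e • (0, 1) := by ext <;> simp
  have hDk : D (d, e) = D (1, 0) * d + D (0, 1) * e := by
    rw [hdec, map_add, map_smul, map_smul, smul_eq_mul, smul_eq_mul]; ring
  have hAk : A (d, e) (d, e) = A (1, 0) (1, 0) * d ^ 2 + (A (1, 0) (0, 1) + A (0, 1) (1, 0)) * (d * e)
      + A (0, 1) (0, 1) * e ^ 2 := by
    rw [hdec]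
    simp only [map_add, map_smul, add_apply, smul_apply, smul_eq_mul]
    ring
  have hn : ‖(d, e)‖ ^ 2 ≤ d ^ 2 + e ^ 2 := norm_sq_le_add (d, e)
  have b1 : |d| ≤ ε / (c + 1) / 2 := by linarith
  have b2 : |e| ≤ ε / (c + 1) / 2 := by linarith
  have b3 : d ^ 2 ≤ |d| / 2 := by rw [← sq_abs]; nlinarith
  have hec : c * (ε / (c + 1) / 2) ≤ ε / 2 := by
    rw [mul_div_assoc', div_le_div_iff_of_pos_right two_pos, mul_div_assoc', div_le_iff₀ (by positivity)]
    nlinarith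
  have b4 : A (1, 0) (1, 0) * d ^ 2 ≤ |A (1, 0) (1, 0)| * (|d| * (ε / (c + 1) / 2)) := by
    rw [← sq_abs d, sq]
    gcongr
    exact le_abs_self _
  have b5 : (A (1, 0) (0, 1) + A (0, 1) (1, 0)) * (d * e)
      ≤ (|A (1, 0) (0, 1)| + |A (0, 1) (1, 0)|) * (|d| * (ε / (c + 1) / 2)) := by
    refine (le_abs_self _).trans ?_
    rw [abs_mul, abs_mul]
    gcongr
    exact abs_add_le _ _
  have b6 : A (1, 0) (1, 0) * d ^ 2 + (A (1, 0) (0, 1) + A (0, 1) (1, 0)) * (d * e)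
      ≤ |d| * (ε / 2) := by
    have := mul_le_mul_of_nonneg_left hec hd0
    calc _ ≤ c * (|d| * (ε / (c + 1) / 2)) := by rw [hc] at *; linarith
      _ = |d| * (c * (ε / (c + 1) / 2)) := by ring
      _ ≤ _ := this
  rw [hDk, hAk] at this
  have b7 := mul_le_mul_of_nonneg_left hn hε.le
  have b8 := mul_le_mul_of_nonneg_left b3 hε.le
  have b9 := mul_nonneg hε.le hd0
  rw [Prod.mk.eta]
  linarith

/-- At a point where `f` has a second-order expansion, the point `z` realising the sup-convolution
inherits the expansion as a superjet of `g`, since shifting `ξ` and `z` together leaves the kernel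
unchanged. -/
lemma IsSupConv.superjet {α β : ℝ} {Q : Set (ℝ × ℝ)} {g f : ℝ × ℝ → ℝ}
    (hf : IsSupConv α β Q g f) {ξ z : ℝ × ℝ} (hz : f ξ = g z - supKernel α β (ξ - z))
    {D : ℝ × ℝ →L[ℝ] ℝ} {A : ℝ × ℝ →L[ℝ] ℝ × ℝ →L[ℝ] ℝ}
    (hA : ∀ ε > 0, ∃ ρ > 0, ∀ k : ℝ × ℝ, ‖k‖ < ρ →
      |f (ξ + k) - f ξ - D k - 1 / 2 * A k k| ≤ ε * ‖k‖ ^ 2) :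
    ParabolicSuperjet Q g z.1 z.2 (D (1, 0)) (D (0, 1)) (A (0, 1) (0, 1)) := by
  refine superjet_of_taylor fun ε hε => ?_
  obtain ⟨ρ, hρ, h⟩ := hA ε hε
  refine ⟨ρ, hρ, fun k hk hQ => ?_⟩
  have h1 := (abs_le.1 (h k hk)).2
  have h2 := hf.2 (ξ + k) (z + k) hQ
  rw [add_sub_add_right_eq_sub] at h2
  linarith

/-- Existence of maximisers for a linearly perturbed sum of sup-convolutions. -/
lemma exists_max_perturbed {α β : ℝ} (hα : 0 < α) (hβ : 0 < β) {Q : Set (ℝ × ℝ)}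
    (hQ : IsCompact Q) {g₁ g₂ f₁ f₂ : ℝ × ℝ → ℝ}
    (hg₁ : UpperSemicontinuousOn g₁ Q) (hg₂ : UpperSemicontinuousOn g₂ Q)
    (hf₁ : IsSupConv α β Q g₁ f₁) (hf₂ : IsSupConv α β Q g₂ f₂)
    (p : (ℝ × ℝ) × (ℝ × ℝ) →L[ℝ] ℝ) :
    ∃ ζ, ∀ ζ' : (ℝ × ℝ) × (ℝ × ℝ), f₁ ζ'.1 + f₂ ζ'.2 - coupling α β ζ' - p ζ'
      ≤ f₁ ζ.1 + f₂ ζ.2 - coupling α β ζ - p ζ := by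
  have hc₁ := hf₁.continuous
  have hc₂ := hf₂.continuous
  have hcc : Continuous (coupling α β) := by unfold coupling; fun_prop
  have hcont : Continuous fun ζ : (ℝ × ℝ) × (ℝ × ℝ) =>
      f₁ ζ.1 + f₂ ζ.2 - coupling α β ζ - p ζ := by fun_prop
  obtain ⟨D, hD⟩ := hQ.isBounded.exists_norm_le
  obtain ⟨B₁, hB₁⟩ := UpperSemicontinuousOn.bddAbove_of_isCompact hQ hg₁
  obtain ⟨B₂, hB₂⟩ := UpperSemicontinuousOn.bddAbove_of_isCompact hQ hg₂
  set γ := min α β with hγ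
  have hγ0 : 0 < γ := lt_min hα hβ
  have u₁ := hf₁.upper_bound hγ0.le (min_le_left _ _) (min_le_right _ _) hD
    (fun z hz => hB₁ (Set.mem_image_of_mem g₁ hz))
  have u₂ := hf₂.upper_bound hγ0.le (min_le_left _ _) (min_le_right _ _) hD
    (fun z hz => hB₂ (Set.mem_image_of_mem g₂ hz))
  set w₀ := f₁ 0 + f₂ 0 - coupling α β 0 - p 0 with hw₀
  set c := |B₁ + B₂ + 4 * γ * D ^ 2 - w₀| with hc
  refine hcont.exists_forall_ge' 0 ?_
  have ev := (tendsto_norm_cocompact_atTop (E := (ℝ × ℝ) × (ℝ × ℝ))).eventually_ge_atTop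
    (max 1 ((‖p‖ + c) / γ))
  filter_upwards [ev] with ζ hζ
  have n1 : 1 ≤ ‖ζ‖ := (le_max_left _ _).trans hζ
  have n2 : ‖p‖ + c ≤ ‖ζ‖ * γ := (div_le_iff₀ hγ0).1 ((le_max_right _ _).trans hζ)
  have n3 : ‖ζ‖ ^ 2 ≤ ‖ζ.1‖ ^ 2 + ‖ζ.2‖ ^ 2 := by
    rcases max_cases ‖ζ.1‖ ‖ζ.2‖ with h | h <;> rw [Prod.norm_def, h.1] <;>
      nlinarith [sq_nonneg ‖ζ.1‖, sq_nonneg ‖ζ.2‖]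
  have n4 : -(p ζ) ≤ ‖p‖ * ‖ζ‖ := (neg_le_abs _).trans (p.le_opNorm ζ)
  have n5 : 0 ≤ coupling α β ζ := by unfold coupling; positivity
  have n6 : c ≤ ‖ζ‖ * c := le_mul_of_one_le_left (abs_nonneg _) n1
  have n7 := mul_le_mul_of_nonneg_left n2 (norm_nonneg ζ)
  have n8 := mul_le_mul_of_nonneg_left n3 hγ0.le
  have n9 := le_abs_self (B₁ + B₂ + 4 * γ * D ^ 2 - w₀)
  have n10 := u₁ ζ.1
  have n11 := u₂ ζ.2
  change f₁ ζ.1 + f₂ ζ.2 - coupling α β ζ - p ζ ≤ w₀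
  nlinarith

lemma coupling_add (α β : ℝ) (ζ k : (ℝ × ℝ) × (ℝ × ℝ)) :
    coupling α β (ζ + k) = coupling α β ζ
      + linForm (2 * β * (ζ.1.1 - ζ.2.1)) (2 * α * (ζ.1.2 - ζ.2.2)) (k.1 - k.2)
      + coupling α β k := by
  simp only [coupling, linForm_apply, Prod.fst_add, Prod.snd_add, Prod.fst_sub, Prod.snd_sub]
  ring

lemma coupling_le {α β : ℝ} (hα : 0 ≤ α) (hβ : 0 ≤ β) (k : (ℝ × ℝ) × (ℝ × ℝ)) :
    coupling α β k ≤ 4 * (α + β) * ‖k‖ ^ 2 := by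
  have h1 : ‖k.1‖ ≤ ‖k‖ := norm_fst_le k
  have h2 : ‖k.2‖ ≤ ‖k‖ := norm_snd_le k
  have h3 : ‖k.1 - k.2‖ ≤ 2 * ‖k‖ := (norm_sub_le _ _).trans (by linarith)
  have h4 : ‖k.1 - k.2‖ ^ 2 ≤ 4 * ‖k‖ ^ 2 := by nlinarith [norm_nonneg (k.1 - k.2)]
  have h5 := mul_le_mul_of_nonneg_left ((sq_fst_le (k.1 - k.2)).trans h4) hβ
  have h6 := mul_le_mul_of_nonneg_left ((sq_snd_le (k.1 - k.2)).trans h4) hα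
  simp only [Prod.fst_sub, Prod.snd_sub] at h5 h6
  unfold coupling
  linarith

/-- Theorem on sums. For upper semicontinuous `g₁`, `g₂` on a compact set there are points `z₁`,
`z₂`, nearly maximal for a penalised version of `g₁ z + g₂ z`, at which `g₁` and `g₂` have
parabolic superjets with almost opposite time slopes and with second-order parts bounded by the
Hessian of the coupling. -/
theorem exists_superjets {α β r : ℝ} (hα : 0 < α) (hβ : 0 < β) (hr : 0 < r) {Q : Set (ℝ × ℝ)}
    (hQ : IsCompact Q) (hne : Q.Nonempty) {g₁ g₂ : ℝ × ℝ → ℝ}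
    (hg₁ : UpperSemicontinuousOn g₁ Q) (hg₂ : UpperSemicontinuousOn g₂ Q) :
    ∃ z₁ ∈ Q, ∃ z₂ ∈ Q, ∃ ξ η : ℝ × ℝ, ∃ a₁ b₁ X₁ a₂ b₂ X₂ : ℝ,
      (∀ z ∈ Q, g₁ z + g₂ z ≤ g₁ z₁ + g₂ z₂ - (supKernel α β (ξ - z₁) + supKernel α β (η - z₂)
        + coupling α β (ξ, η)) + r * (‖z‖ + ‖ξ‖ + ‖η‖)) ∧
      |a₁ + a₂| ≤ r ∧ (∀ c d : ℝ, X₁ * c ^ 2 + X₂ * d ^ 2 ≤ 2 * α * (c - d) ^ 2) ∧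
      ParabolicSuperjet Q g₁ z₁.1 z₁.2 a₁ b₁ X₁ ∧ ParabolicSuperjet Q g₂ z₂.1 z₂.2 a₂ b₂ X₂ := by
  obtain ⟨f₁, hf₁⟩ := exists_isSupConv α β hQ hne hg₁
  obtain ⟨f₂, hf₂⟩ := exists_isSupConv α β hQ hne hg₂
  set W : (ℝ × ℝ) × (ℝ × ℝ) → ℝ := fun ζ => f₁ ζ.1 + f₂ ζ.2 - coupling α β ζ with hW
  set C := 8 * (α + β) with hC
  have hC0 : 0 ≤ C := by positivity
  -- at a maximum of `W - p` all three functions `f₁`, `f₂`, `W` have quadratic contact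
  have contact : ∀ p : (ℝ × ℝ) × (ℝ × ℝ) →L[ℝ] ℝ, ∀ ζ, (∀ ζ', W ζ' - p ζ' ≤ W ζ - p ζ) →
      (ζ ∈ C11Set W C ∧ fderiv ℝ W ζ = p) ∧
      (ζ.1 ∈ C11Set f₁ C ∧ fderiv ℝ f₁ ζ.1 =
        linForm (2 * β * (ζ.1.1 - ζ.2.1)) (2 * α * (ζ.1.2 - ζ.2.2))
          + p.comp (ContinuousLinearMap.inl ℝ (ℝ × ℝ) (ℝ × ℝ))) ∧
      (ζ.2 ∈ C11Set f₂ C ∧ fderiv ℝ f₂ ζ.2 =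
        -linForm (2 * β * (ζ.1.1 - ζ.2.1)) (2 * α * (ζ.1.2 - ζ.2.2))
          + p.comp (ContinuousLinearMap.inr ℝ (ℝ × ℝ) (ℝ × ℝ))) := by
    intro p ζ hmax
    obtain ⟨l₁, hl₁⟩ := hf₁.lower_touch hα.le hβ.le ζ.1
    obtain ⟨l₂, hl₂⟩ := hf₂.lower_touch hα.le hβ.le ζ.2
    set m := linForm (2 * β * (ζ.1.1 - ζ.2.1)) (2 * α * (ζ.1.2 - ζ.2.2)) with hm
    refine ⟨?_, ?_, ?_⟩
    · refine mem_C11Set_of_touch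
        (l₁ := (l₁ - m).comp (ContinuousLinearMap.fst ℝ (ℝ × ℝ) (ℝ × ℝ))
          + (l₂ + m).comp (ContinuousLinearMap.snd ℝ (ℝ × ℝ) (ℝ × ℝ))) (fun b => ?_) (fun b => ?_)
      · have e1 := hl₁ b.1
        have e2 := hl₂ b.2
        have e3 := coupling_add α β ζ (b - ζ)
        have e4 := coupling_le hα.le hβ.le (b - ζ)
        rw [add_sub_cancel, ← hm] at e3
        have e5 : ‖b.1 - ζ.1‖ ^ 2 ≤ ‖b - ζ‖ ^ 2 :=
          pow_le_pow_left₀ (norm_nonneg _) (norm_fst_le (b - ζ)) 2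
        have e6 : ‖b.2 - ζ.2‖ ^ 2 ≤ ‖b - ζ‖ ^ 2 :=
          pow_le_pow_left₀ (norm_nonneg _) (norm_snd_le (b - ζ)) 2
        have e7 := mul_le_mul_of_nonneg_left e5 (show 0 ≤ 2 * (α + β) by positivity)
        have e8 := mul_le_mul_of_nonneg_left e6 (show 0 ≤ 2 * (α + β) by positivity)
        simp only [map_sub, Prod.fst_sub, Prod.snd_sub, hW, hC, add_apply, sub_apply,
          ContinuousLinearMap.comp_apply, ContinuousLinearMap.coe_fst',
          ContinuousLinearMap.coe_snd'] at *
        linarith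
      · have := hmax b
        rw [map_sub]
        have : 0 ≤ C * ‖b - ζ‖ ^ 2 := by positivity
        linarith
    · refine mem_C11Set_of_touch (l₁ := l₁) (fun b => ?_) (fun b => ?_)
      · have := hl₁ b
        have : 0 ≤ (α + β) * ‖b - ζ.1‖ ^ 2 := by positivity
        rw [hC]
        linarith
      · have e1 := hmax (ζ + (b - ζ.1, 0))
        have e2 := coupling_add α β ζ (b - ζ.1, 0)
        have e3 := coupling_le hα.le hβ.le (b - ζ.1, 0)
        have e4 : ‖((b - ζ.1, 0) : (ℝ × ℝ) × (ℝ × ℝ))‖ = ‖b - ζ.1‖ := by simp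
        have e5 : 0 ≤ (α + β) * ‖b - ζ.1‖ ^ 2 := by positivity
        rw [e4] at e3
        simp only [hW, e2, Prod.fst_add, Prod.snd_add, add_zero, add_sub_cancel, sub_zero,
          map_add] at e1
        rw [hC]
        simp only [add_apply, ContinuousLinearMap.comp_apply, ContinuousLinearMap.inl_apply]
        linarith
    · refine mem_C11Set_of_touch (l₁ := l₂) (fun b => ?_) (fun b => ?_)
      · have := hl₂ b
        have : 0 ≤ (α + β) * ‖b - ζ.2‖ ^ 2 := by positivity
        rw [hC]
        linarith
      · have e1 := hmax (ζ + (0, b - ζ.2))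
        have e2 := coupling_add α β ζ (0, b - ζ.2)
        have e3 := coupling_le hα.le hβ.le (0, b - ζ.2)
        have e4 : ‖((0, b - ζ.2) : (ℝ × ℝ) × (ℝ × ℝ))‖ = ‖b - ζ.2‖ := by simp
        have e5 : 0 ≤ (α + β) * ‖b - ζ.2‖ ^ 2 := by positivity
        rw [e4] at e3
        simp only [hW, e2, Prod.fst_add, Prod.snd_add, add_zero, add_sub_cancel, zero_sub,
          map_add, map_neg] at e1
        rw [hC]
        simp only [add_apply, neg_apply, ContinuousLinearMap.comp_apply,
          ContinuousLinearMap.inr_apply]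
        linarith
  -- the pairs with a component at which the second-order expansion fails form a null set
  have t₁ := ae_taylor_C11Set MeasureTheory.volume f₁ hC0
  have t₂ := ae_taylor_C11Set MeasureTheory.volume f₂ hC0
  have t₁' := (MeasureTheory.Measure.quasiMeasurePreserving_fst
    (μ := (MeasureTheory.volume : MeasureTheory.Measure (ℝ × ℝ)))
    (ν := (MeasureTheory.volume : MeasureTheory.Measure (ℝ × ℝ)))).ae t₁
  have t₂' := (MeasureTheory.Measure.quasiMeasurePreserving_snd
    (μ := (MeasureTheory.volume : MeasureTheory.Measure (ℝ × ℝ)))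
    (ν := (MeasureTheory.volume : MeasureTheory.Measure (ℝ × ℝ)))).ae t₂
  have hnull := MeasureTheory.ae_iff.1 (t₁'.and t₂')
  obtain ⟨p, hp, ζ, hζB, hmax⟩ := exists_max_notMem_null _ W hC0 hr _ hnull (by
    intro p _
    obtain ⟨ζ, hζ⟩ := exists_max_perturbed hα hβ hQ hg₁ hg₂ hf₁ hf₂ p
    have := (contact p ζ hζ).1
    exact ⟨ζ, this.1, this.2, hζ⟩)
  obtain ⟨-, ⟨hm₁, hd₁⟩, ⟨hm₂, hd₂⟩⟩ := contact p ζ hmax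
  simp only [Set.mem_ofPred_eq, not_not] at hζB
  obtain ⟨A₁, hA₁⟩ := hζB.1 hm₁
  obtain ⟨A₂, hA₂⟩ := hζB.2 hm₂
  obtain ⟨z₁, hz₁, e₁⟩ := hf₁.1 ζ.1
  obtain ⟨z₂, hz₂, e₂⟩ := hf₂.1 ζ.2
  refine ⟨z₁, hz₁, z₂, hz₂, ζ.1, ζ.2, _, _, _, _, _, _, fun z hz => ?_, ?_, ?_,
    hf₁.superjet e₁ hA₁, hf₂.superjet e₂ hA₂⟩
  · have h1 := hmax (z, z)
    have h2 := hf₁.2 z z hz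
    have h3 := hf₂.2 z z hz
    have h4 : -(r * (‖ζ.1‖ + ‖ζ.2‖)) ≤ p ζ := by
      refine neg_le_of_abs_le ((p.le_opNorm ζ).trans ?_)
      have : ‖ζ‖ ≤ ‖ζ.1‖ + ‖ζ.2‖ := by
        rw [Prod.norm_def]
        exact max_le (by linarith [norm_nonneg ζ.2]) (by linarith [norm_nonneg ζ.1])
      gcongr
    have h5 : p (z, z) ≤ r * ‖z‖ := by
      refine (le_abs_self _).trans ((p.le_opNorm _).trans ?_)
      have : ‖(z, z)‖ = ‖z‖ := by simp [Prod.norm_def]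
      rw [this]
      gcongr
    have h6 : supKernel α β (z - z) = 0 := by simp [supKernel]
    have h7 : coupling α β (z, z) = 0 := by simp [coupling]
    simp only [hW, h7] at h1
    rw [h6] at h2 h3
    rw [Prod.mk.eta]
    linarith
  · rw [hd₁, hd₂]
    have h1 : p ((1, 0), 0) + p (0, (1, 0)) = p ((1, 0), (1, 0)) := by
      rw [← map_add]; simp
    have h2 : ‖(((1, 0), (1, 0)) : (ℝ × ℝ) × (ℝ × ℝ))‖ = 1 := by simp [Prod.norm_def]
    have h3 := p.le_opNorm ((1, 0), (1, 0))
    rw [h2, mul_one, Real.norm_eq_abs, ← h1] at h3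
    refine le_trans (le_of_eq ?_) (h3.trans hp.le)
    congr 1
    simp only [add_apply, neg_apply, ContinuousLinearMap.comp_apply,
      ContinuousLinearMap.inl_apply, ContinuousLinearMap.inr_apply]
    ring
  · intro c d
    -- second-order condition at the maximum in the direction `((0, c), (0, d))`
    have key : ∀ ε > 0, A₁ (0, 1) (0, 1) * c ^ 2 + A₂ (0, 1) (0, 1) * d ^ 2
        ≤ 2 * α * (c - d) ^ 2 + ε * (2 * (c ^ 2 + d ^ 2)) := by
      intro ε hε
      obtain ⟨ρ₁, hρ₁, h₁⟩ := hA₁ ε hε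
      obtain ⟨ρ₂, hρ₂, h₂⟩ := hA₂ ε hε
      set τ := min ρ₁ ρ₂ / (2 * (|c| + |d| + 1)) with hτ
      have hτ0 : 0 < τ := by positivity
      have hb : τ * (|c| + |d| + 1) < min ρ₁ ρ₂ := by
        rw [hτ]
        have : 0 < min ρ₁ ρ₂ := lt_min hρ₁ hρ₂
        field_simp
        linarith
      have hc0 := abs_nonneg c
      have hd0 := abs_nonneg d
      have n₁ : ‖((0, τ * c) : ℝ × ℝ)‖ = τ * |c| := by
        simp [Prod.norm_def, abs_of_pos hτ0, mul_nonneg hτ0.le hc0]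
      have n₂ : ‖((0, τ * d) : ℝ × ℝ)‖ = τ * |d| := by
        simp [Prod.norm_def, abs_of_pos hτ0, mul_nonneg hτ0.le hd0]
      have k₁ := h₁ (0, τ * c) (by
        rw [n₁]; exact lt_of_le_of_lt (by gcongr; linarith) (hb.trans_le (min_le_left _ _)))
      have k₂ := h₂ (0, τ * d) (by
        rw [n₂]; exact lt_of_le_of_lt (by gcongr; linarith) (hb.trans_le (min_le_right _ _)))
      rw [n₁, mul_pow, sq_abs, hd₁] at k₁
      rw [n₂, mul_pow, sq_abs, hd₂] at k₂
      have s₁ : ((0, τ * c) : ℝ × ℝ) = (τ * c) • (0, 1) := by simp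
      have s₂ : ((0, τ * d) : ℝ × ℝ) = (τ * d) • (0, 1) := by simp
      have a₁ : A₁ (0, τ * c) (0, τ * c) = τ ^ 2 * (A₁ (0, 1) (0, 1) * c ^ 2) := by
        rw [s₁]; simp only [map_smul, smul_apply, smul_eq_mul]; ring
      have a₂ : A₂ (0, τ * d) (0, τ * d) = τ ^ 2 * (A₂ (0, 1) (0, 1) * d ^ 2) := by
        rw [s₂]; simp only [map_smul, smul_apply, smul_eq_mul]; ring
      have m := hmax (ζ + ((0, τ * c), (0, τ * d)))
      have q1 := coupling_add α β ζ ((0, τ * c), (0, τ * d))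
      have q2 : coupling α β ((0, τ * c), (0, τ * d)) = τ ^ 2 * (α * (c - d) ^ 2) := by
        simp only [coupling]; ring
      have q3 : p ((0, τ * c), 0) + p (0, (0, τ * d)) = p ((0, τ * c), (0, τ * d)) := by
        rw [← map_add]; simp
      simp only [hW, q1, q2, Prod.fst_add, Prod.snd_add, map_add, map_sub, ← q3] at m
      rw [a₁] at k₁
      rw [a₂] at k₂
      simp only [add_apply, neg_apply, ContinuousLinearMap.comp_apply,
        ContinuousLinearMap.inl_apply, ContinuousLinearMap.inr_apply] at k₁ k₂
      have k₁' := (abs_le.1 k₁).1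
      have k₂' := (abs_le.1 k₂).1
      have fin : τ ^ 2 * (A₁ (0, 1) (0, 1) * c ^ 2 + A₂ (0, 1) (0, 1) * d ^ 2)
          ≤ τ ^ 2 * (2 * α * (c - d) ^ 2 + ε * (2 * (c ^ 2 + d ^ 2))) := by
        linarith
      exact le_of_mul_le_mul_left fin (by positivity)
    refine le_of_forall_pos_le_add fun ε hε => ?_
    have hcd : 0 ≤ 2 * (c ^ 2 + d ^ 2) := by positivity
    refine (key (ε / (2 * (c ^ 2 + d ^ 2) + 1)) (by positivity)).trans ?_
    gcongr
    rw [div_mul_eq_mul_div, div_le_iff₀ (by positivity)]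
    nlinarith

/-! ### The growth penalty -/

/-- The time factor of the growth penalty. Its derivative dominates `μ` times itself, and it blows
up at time `T`. -/
noncomputable def timeFactor (μ T t : ℝ) : ℝ := Real.exp (μ * t) / (T - t)

lemma hasDerivAt_timeFactor (μ : ℝ) {T t : ℝ} (ht : t < T) :
    HasDerivAt (timeFactor μ T)
      (μ * timeFactor μ T t + Real.exp (μ * t) / (T - t) ^ 2) t := by
  have hne : T - t ≠ 0 := (sub_pos.2 ht).ne'
  have h1 : HasDerivAt (fun s : ℝ => Real.exp (μ * s)) (Real.exp (μ * t) * (μ * 1)) t :=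
    ((hasDerivAt_id t).const_mul μ).exp
  have h2 : HasDerivAt (fun s : ℝ => T - s) (-1) t := by
    simpa using (hasDerivAt_id t).const_sub T
  refine (h1.div h2 hne).congr_deriv ?_
  unfold timeFactor
  field_simp
  ring

lemma one_div_le_timeFactor {μ T t : ℝ} (hμ : 0 ≤ μ) (ht0 : 0 ≤ t) (ht : t < T) :
    1 / (T - t) ≤ timeFactor μ T t := by
  have : 0 < T - t := sub_pos.2 ht
  unfold timeFactor
  gcongr
  exact Real.one_le_exp (by positivity)

/-- Adding the growth penalty to a function shifts its superjets by the derivatives of the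
penalty. The point is interior to `Q` relative to `D`, so `Q` can be replaced by `D`. -/
lemma superjet_add_penalty {Q D : Set (ℝ × ℝ)} {u : ℝ × ℝ → ℝ} {G : ℝ → ℝ} {κ G' t x a b X ρ : ℝ}
    (hκ : 0 < κ) (hG : HasDerivAt G G' t) (hρ : 0 < ρ)
    (hQ : ∀ s y : ℝ, (s, y) ∈ D → |s - t| + |y - x| < ρ → (s, y) ∈ Q)
    (hjet : ParabolicSuperjet Q (fun z => u z - κ * (1 + z.2 ^ 2) * G z.1) t x a b X) :
    ParabolicSuperjet D u t x (a + κ * (1 + x ^ 2) * G') (b + 2 * κ * x * G t)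
      (X + 2 * κ * G t) := by
  intro ε hε
  obtain ⟨δ₁, hδ₁, h₁⟩ := hjet (ε / 2) (by positivity)
  set ε' := min 1 (ε / (4 * (κ * (1 + x ^ 2)))) with hε'
  have hε'0 : 0 < ε' := by positivity
  have hb1 : ε' ≤ 1 := min_le_left _ _
  have hb2 : κ * (1 + x ^ 2) * ε' ≤ ε / 4 := by
    have : ε' ≤ ε / (4 * (κ * (1 + x ^ 2))) := min_le_right _ _
    rw [le_div_iff₀ (by positivity)] at this
    linarith
  obtain ⟨δ₂, hδ₂, h₂⟩ := Metric.eventually_nhds_iff.1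
    ((hasDerivAt_iff_isLittleO.1 hG).def hε'0)
  set c := κ * (2 * |x| + 1) * (|G'| + 1) with hc
  have hc0 : 0 < c := by positivity
  refine ⟨min (min δ₁ δ₂) (min ρ (min 1 (ε / (4 * c)))), by positivity, fun s y hD hsy => ?_⟩
  simp only [lt_min_iff] at hsy
  obtain ⟨⟨l1, l2⟩, l3, l4, l5⟩ := hsy
  have hd0 := abs_nonneg (s - t)
  have he0 := abs_nonneg (y - x)
  have j := h₁ s y (hQ s y hD l3) l1
  have k := h₂ (y := s) (by rw [Real.dist_eq]; linarith)
  simp only [smul_eq_mul, Real.norm_eq_abs] at k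
  set d := s - t with hd
  set e := y - x with he
  have hy : y ^ 2 = x ^ 2 + 2 * x * e + e ^ 2 := by rw [he]; ring
  have k1 : |G s - G t| ≤ (|G'| + 1) * |d| := by
    have : G s - G t = (G s - G t - d * G') + d * G' := by ring
    rw [this]
    refine (abs_add_le _ _).trans ?_
    rw [abs_mul]
    nlinarith
  have k2 : |2 * x * e + e ^ 2| ≤ |e| * (2 * |x| + 1) := by
    have : 2 * x * e + e ^ 2 = e * (2 * x + e) := by ring
    rw [this, abs_mul]
    gcongr
    refine (abs_add_le _ _).trans ?_
    rw [abs_mul, abs_two]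
    linarith
  have k3 : κ * ((2 * x * e + e ^ 2) * (G s - G t)) ≤ ε / 4 * |d| := by
    have e1 : |e| * c ≤ ε / 4 := by
      have : |e| ≤ ε / (4 * c) := by linarith
      rw [le_div_iff₀ (by positivity)] at this
      linarith
    calc κ * ((2 * x * e + e ^ 2) * (G s - G t))
        ≤ κ * (|2 * x * e + e ^ 2| * |G s - G t|) := by
          rw [← abs_mul]
          exact mul_le_mul_of_nonneg_left (le_abs_self _) hκ.le
      _ ≤ κ * ((|e| * (2 * |x| + 1)) * ((|G'| + 1) * |d|)) := by gcongr
      _ = |e| * c * |d| := by rw [hc]; ring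
      _ ≤ _ := by gcongr
  have k4 : κ * (1 + x ^ 2) * (G s - G t - d * G') ≤ ε / 4 * |d| := by
    calc _ ≤ κ * (1 + x ^ 2) * (ε' * |d|) := by
          gcongr
          exact (le_abs_self _).trans k
      _ = κ * (1 + x ^ 2) * ε' * |d| := by ring
      _ ≤ _ := by gcongr
  simp only at j
  rw [hy] at j
  have he2 : 0 ≤ ε * e ^ 2 := by positivity
  have id1 : κ * (1 + (x ^ 2 + 2 * x * e + e ^ 2)) * G s - κ * (1 + x ^ 2) * G t
      = κ * (1 + x ^ 2) * (G s - G t - d * G') + κ * (1 + x ^ 2) * G' * d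
        + κ * ((2 * x * e + e ^ 2) * (G s - G t)) + 2 * κ * x * G t * e + κ * G t * e ^ 2 := by
    ring
  linarith

lemma subjet_of_superjet_neg {D : Set (ℝ × ℝ)} {v : ℝ × ℝ → ℝ} {t x a b X : ℝ}
    (hjet : ParabolicSuperjet D (fun z => -v z) t x a b X) :
    ParabolicSubjet D v t x (-a) (-b) (-X) := by
  intro ε hε
  obtain ⟨δ, hδ, h⟩ := hjet ε hε
  refine ⟨δ, hδ, fun s y hD hsy => ?_⟩
  have := h s y hD hsy
  simp only at this
  linarith

/-- The penalty makes sub- and supersolutions strict, as its time derivative exceeds the diffusion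
term of the penalty by at least `κ / T ^ 2`. -/
lemma strict_of_penalised {κ S T t x a X s : ℝ} (hκ : 0 < κ) (hS : 0 ≤ S) (ht0 : 0 ≤ t)
    (ht : t < T) (hs : s ^ 2 ≤ S * (1 + x ^ 2))
    (h : a + κ * (1 + x ^ 2) * (S * timeFactor S T t + Real.exp (S * t) / (T - t) ^ 2)
      - s ^ 2 / 2 * (X + 2 * κ * timeFactor S T t) ≤ 0) :
    a + κ / T ^ 2 ≤ s ^ 2 / 2 * X := by
  have hTt : 0 < T - t := sub_pos.2 ht
  have hG0 : 0 ≤ timeFactor S T t :=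
    (one_div_pos.2 hTt).le.trans (one_div_le_timeFactor hS ht0 ht)
  have h1 : 1 / T ^ 2 ≤ Real.exp (S * t) / (T - t) ^ 2 := by
    have : (T - t) ^ 2 ≤ T ^ 2 := by gcongr; linarith
    gcongr
    exact Real.one_le_exp (by positivity)
  have h2 : 1 * (1 / T ^ 2) ≤ (1 + x ^ 2) * (Real.exp (S * t) / (T - t) ^ 2) := by
    gcongr
    nlinarith [sq_nonneg x]
  have h3 := mul_le_mul_of_nonneg_left h2 hκ.le
  have h4 := mul_le_mul_of_nonneg_left (mul_le_mul_of_nonneg_right hs hG0) hκ.le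
  have h5 : κ / T ^ 2 = κ * (1 * (1 / T ^ 2)) := by ring
  rw [h5]
  linarith

/-- The penalty confines the comparison to a compact set: with `B` an upper bound for penalised
functions, a penalised function is below `-B` near time `T` and for large `|x|`. -/
lemma exists_localisation {κ S T C : ℝ} (hκ : 0 < κ) (hS : 0 ≤ S) (hT : 0 < T) (hC : 0 < C) :
    ∃ B R T' : ℝ, 0 < B ∧ 0 < R ∧ 0 < T' ∧ T' < T ∧ ∀ t x U : ℝ, 0 ≤ t → t < T →
      U ≤ C * (1 + |x|) → U - κ * (1 + x ^ 2) * timeFactor S T t ≤ B ∧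
        (T' ≤ t ∨ R ≤ |x| → U - κ * (1 + x ^ 2) * timeFactor S T t ≤ -B) := by
  set k := κ / T with hk
  have hk0 : 0 < k := by positivity
  set B := C + C ^ 2 / k with hB
  have hB0 : 0 < B := by positivity
  have hm0 : 0 < min (T / 2) (κ / (2 * C + B)) := by positivity
  refine ⟨B, max 1 ((2 * C + B) / k), T - min (T / 2) (κ / (2 * C + B)), hB0, by positivity, ?_,
    by linarith, ?_⟩
  · have := min_le_left (T / 2) (κ / (2 * C + B))
    linarith
  intro t x U ht0 ht hU
  have hTt : 0 < T - t := sub_pos.2 ht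
  have hG := one_div_le_timeFactor hS ht0 ht
  have hG' : 1 / T ≤ timeFactor S T t :=
    le_trans (one_div_le_one_div_of_le hTt (by linarith)) hG
  have hkG : k * (1 + x ^ 2) ≤ κ * (1 + x ^ 2) * timeFactor S T t := by
    calc k * (1 + x ^ 2) = κ * (1 + x ^ 2) * (1 / T) := by rw [hk]; ring
      _ ≤ _ := by gcongr
  have hx2 : x ^ 2 = |x| ^ 2 := (sq_abs x).symm
  constructor
  · have h1 : C * |x| ≤ k * |x| ^ 2 + C ^ 2 / k := by
      have h2 : 0 ≤ (k * |x| - C) ^ 2 / k := by positivity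
      have h3 : (k * |x| - C) ^ 2 / k = k * |x| ^ 2 - 2 * C * |x| + C ^ 2 / k := by
        field_simp
        ring
      have h4 : 0 ≤ C * |x| := by positivity
      linarith
    rw [← hx2] at h1
    linarith
  · rintro (h | h)
    · have h1 : T - t ≤ κ / (2 * C + B) := by
        have := min_le_right (T / 2) (κ / (2 * C + B))
        linarith
      have h2 : (2 * C + B) / κ ≤ timeFactor S T t := by
        refine le_trans ?_ hG
        rw [div_le_div_iff₀ hκ hTt]
        rw [le_div_iff₀ (by positivity)] at h1
        linarith
      have h3 : (2 * C + B) * (1 + x ^ 2) ≤ κ * (1 + x ^ 2) * timeFactor S T t := by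
        calc (2 * C + B) * (1 + x ^ 2) = κ * (1 + x ^ 2) * ((2 * C + B) / κ) := by field_simp
          _ ≤ _ := by gcongr
      have h4 : 1 + |x| ≤ 2 * (1 + x ^ 2) := by rw [hx2]; nlinarith [sq_nonneg (|x| - 1)]
      have h5 := mul_le_mul_of_nonneg_left h4 hC.le
      have h6 : 0 ≤ B * x ^ 2 := by positivity
      linarith
    · have h1 : 1 ≤ |x| := (le_max_left _ _).trans h
      have h2 : 2 * C + B ≤ |x| * k := (div_le_iff₀ hk0).1 ((le_max_right _ _).trans h)
      have h3 : (2 * C + B) * |x| ≤ k * |x| ^ 2 := by nlinarith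
      rw [← hx2] at h3
      have h4 := mul_le_mul_of_nonneg_left h1 hC.le
      have h5 := mul_le_mul_of_nonneg_left h1 hB0.le
      linarith

/-! ### Estimates at nearly maximal points -/

/-- A strict upper bound on the diagonal of a function of two points persists near the diagonal. -/
lemma exists_lt_near_diagonal {S : Set ((ℝ × ℝ) × (ℝ × ℝ))} (hS : IsCompact S)
    {g : (ℝ × ℝ) × (ℝ × ℝ) → ℝ} (hg : UpperSemicontinuousOn g S) {c : ℝ}
    (hdiag : ∀ z, (z, z) ∈ S → g (z, z) < c) :
    ∃ r > 0, ∀ w ∈ S, dist w.1 w.2 < r → g w < c := by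
  have hK := hg.isCompact_inter_preimage_Ici hS c
  rcases (S ∩ g ⁻¹' Set.Ici c).eq_empty_or_nonempty with he | hne
  · refine ⟨1, one_pos, fun w hw _ => ?_⟩
    by_contra hn
    have : w ∈ S ∩ g ⁻¹' Set.Ici c := ⟨hw, not_lt.1 hn⟩
    rw [he] at this
    exact this
  · obtain ⟨w₀, hw₀, hmin⟩ := hK.exists_isMinOn hne
      (f := fun w : (ℝ × ℝ) × (ℝ × ℝ) => dist w.1 w.2) (by fun_prop)
    refine ⟨dist w₀.1 w₀.2, ?_, fun w hw hd => ?_⟩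
    · refine dist_pos.2 fun heq => ?_
      have hww : w₀ = (w₀.1, w₀.1) := Prod.ext rfl heq.symm
      have h1 := hdiag w₀.1 (hww ▸ hw₀.1)
      rw [← hww] at h1
      exact absurd hw₀.2 (not_le.2 h1)
    · by_contra hn
      have : w ∈ S ∩ g ⁻¹' Set.Ici c := ⟨hw, not_lt.1 hn⟩
      exact absurd (hmin this) (not_le.2 hd)

lemma sq_add_three_le (a b c : ℝ) : (a + b + c) ^ 2 ≤ 3 * (a ^ 2 + b ^ 2 + c ^ 2) := by
  nlinarith [sq_nonneg (a - b), sq_nonneg (b - c), sq_nonneg (a - c)]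

lemma distances_le_penalty {α β : ℝ} (hα : 0 ≤ α) (hβ : 0 ≤ β) (z₁ z₂ ξ η : ℝ × ℝ) :
    β * (z₁.1 - z₂.1) ^ 2 ≤ 3 * (supKernel α β (ξ - z₁) + supKernel α β (η - z₂)
        + coupling α β (ξ, η)) ∧
      α * (z₁.2 - z₂.2) ^ 2 ≤ 3 * (supKernel α β (ξ - z₁) + supKernel α β (η - z₂)
        + coupling α β (ξ, η)) := by
  have t := sq_add_three_le (-(ξ.1 - z₁.1)) (ξ.1 - η.1) (η.1 - z₂.1)
  have x := sq_add_three_le (-(ξ.2 - z₁.2)) (ξ.2 - η.2) (η.2 - z₂.2)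
  rw [show -(ξ.1 - z₁.1) + (ξ.1 - η.1) + (η.1 - z₂.1) = z₁.1 - z₂.1 by ring, neg_sq] at t
  rw [show -(ξ.2 - z₁.2) + (ξ.2 - η.2) + (η.2 - z₂.2) = z₁.2 - z₂.2 by ring, neg_sq] at x
  have t' := mul_le_mul_of_nonneg_left t hβ
  have x' := mul_le_mul_of_nonneg_left x hα
  have p1 := mul_nonneg hβ (sq_nonneg (ξ.1 - z₁.1))
  have p2 := mul_nonneg hβ (sq_nonneg (ξ.1 - η.1))
  have p3 := mul_nonneg hβ (sq_nonneg (η.1 - z₂.1))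
  have p4 := mul_nonneg hα (sq_nonneg (ξ.2 - z₁.2))
  have p5 := mul_nonneg hα (sq_nonneg (ξ.2 - η.2))
  have p6 := mul_nonneg hα (sq_nonneg (η.2 - z₂.2))
  simp only [supKernel, coupling, Prod.fst_sub, Prod.snd_sub]
  constructor <;> linarith

lemma supKernel_nonneg {α β : ℝ} (hα : 0 ≤ α) (hβ : 0 ≤ β) (z : ℝ × ℝ) : 0 ≤ supKernel α β z := by
  unfold supKernel; positivity

lemma coupling_nonneg {α β : ℝ} (hα : 0 ≤ α) (hβ : 0 ≤ β) (ζ : (ℝ × ℝ) × (ℝ × ℝ)) :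
    0 ≤ coupling α β ζ := by
  unfold coupling; positivity

lemma norm_le_of_supKernel {α β D : ℝ} (hα : 1 ≤ α) (hβ : 1 ≤ β) {ξ z : ℝ × ℝ} (hz : ‖z‖ ≤ D) :
    ‖ξ‖ ≤ D + 1 + supKernel α β (ξ - z) := by
  have h1 : ‖ξ‖ ≤ ‖ξ - z‖ + ‖z‖ := by
    simpa using norm_add_le (ξ - z) z
  have h2 := norm_sq_le_add (ξ - z)
  have h3 := mul_le_mul_of_nonneg_right hα (sq_nonneg (ξ - z).2)
  have h4 := mul_le_mul_of_nonneg_right hβ (sq_nonneg (ξ - z).1)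
  unfold supKernel
  nlinarith [sq_nonneg (‖ξ - z‖ - 1), sq_nonneg (ξ - z).2, sq_nonneg (ξ - z).1]

/-- If `a * d ^ 2 ≤ b` and the weight `a` is large, then `|d|` is small. -/
lemma abs_lt_of_weight {a b d r : ℝ} (hr : 0 < r) (hb : 0 ≤ b) (ha : b / r ^ 2 + 1 ≤ a)
    (h : a * d ^ 2 ≤ b) : |d| < r := by
  have h1 : b < a * r ^ 2 := by
    have : (b / r ^ 2 + 1) * r ^ 2 ≤ a * r ^ 2 := by gcongr
    have h2 : (b / r ^ 2 + 1) * r ^ 2 = b + r ^ 2 := by field_simp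
    have : 0 < r ^ 2 := by positivity
    linarith
  have ha0 : 0 < a := lt_of_lt_of_le (by positivity) ha
  have h3 : d ^ 2 < r ^ 2 := lt_of_mul_lt_mul_left (h.trans_lt h1) ha0.le
  exact abs_lt_of_sq_lt_sq h3 hr.le

lemma sq_le_of_lipschitz {σ : ℝ × ℝ → ℝ} {L T : ℝ}
    (hσcont : ContinuousOn σ (Set.Icc 0 T ×ˢ Set.univ))
    (hσLip : ∀ t ∈ Set.Icc (0 : ℝ) T, ∀ x y : ℝ, |σ (t, x) - σ (t, y)| ≤ L * |x - y|) :
    ∃ S : ℝ, 0 ≤ S ∧ ∀ t ∈ Set.Icc (0 : ℝ) T, ∀ x : ℝ, σ (t, x) ^ 2 ≤ S * (1 + x ^ 2) := by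
  have hc : ContinuousOn (fun t : ℝ => σ (t, 0)) (Set.Icc 0 T) :=
    hσcont.comp (by fun_prop) (fun t ht => ⟨ht, Set.mem_univ _⟩)
  obtain ⟨S₀, hS₀⟩ := isCompact_Icc.exists_bound_of_continuousOn hc
  refine ⟨2 * (S₀ ^ 2 + L ^ 2), by positivity, fun t ht x => ?_⟩
  have h1 := hS₀ t ht
  have h2 := hσLip t ht x 0
  rw [sub_zero] at h2
  have h3 : σ (t, 0) ^ 2 ≤ S₀ ^ 2 := by
    rw [← sq_abs]; exact pow_le_pow_left₀ (abs_nonneg _) h1 2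
  have h4 : (σ (t, x) - σ (t, 0)) ^ 2 ≤ L ^ 2 * x ^ 2 := by
    rw [← sq_abs, ← sq_abs x, ← mul_pow]; exact pow_le_pow_left₀ (abs_nonneg _) h2 2
  nlinarith [sq_nonneg (σ (t, x) - σ (t, 0) - σ (t, 0)), mul_nonneg (sq_nonneg S₀) (sq_nonneg x),
    sq_nonneg L]

/-! ### The comparison -/

lemma usc_penalised {w : ℝ × ℝ → ℝ} {κ S T T' R : ℝ} (hT' : T' < T)
    (hw : UpperSemicontinuousOn w (Set.Ico 0 T ×ˢ Set.univ)) :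
    UpperSemicontinuousOn (fun z => w z - κ * (1 + z.2 ^ 2) * timeFactor S T z.1)
      (Set.Icc 0 T' ×ˢ Set.Icc (-R) R) := by
  have hsub : Set.Icc 0 T' ×ˢ Set.Icc (-R) R ⊆ Set.Ico 0 T ×ˢ (Set.univ : Set ℝ) :=
    fun z hz => ⟨⟨hz.1.1, hz.1.2.trans_lt hT'⟩, Set.mem_univ _⟩
  have hc : ContinuousOn (fun z : ℝ × ℝ => -(κ * (1 + z.2 ^ 2) * timeFactor S T z.1))
      (Set.Icc 0 T' ×ˢ Set.Icc (-R) R) := by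
    unfold timeFactor
    refine ((ContinuousOn.mul (by fun_prop) (ContinuousOn.div (by fun_prop) (by fun_prop) ?_))).neg
    exact fun z hz => (sub_pos.2 (hz.1.2.trans_lt hT')).ne'
  simpa only [sub_eq_add_neg] using (hw.mono hsub).add hc.upperSemicontinuousOn

lemma superjet_of_penalised {w : ℝ × ℝ → ℝ} {κ S T T' R t x a b X : ℝ} (hκ : 0 < κ) (hT' : T' < T)
    (ht : t < T') (hx : |x| < R)
    (hjet : ParabolicSuperjet (Set.Icc 0 T' ×ˢ Set.Icc (-R) R)
      (fun z => w z - κ * (1 + z.2 ^ 2) * timeFactor S T z.1) t x a b X) :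
    ParabolicSuperjet (Set.Ioo 0 T ×ˢ Set.univ) w t x
      (a + κ * (1 + x ^ 2) * (S * timeFactor S T t + Real.exp (S * t) / (T - t) ^ 2))
      (b + 2 * κ * x * timeFactor S T t) (X + 2 * κ * timeFactor S T t) := by
  refine superjet_add_penalty hκ (hasDerivAt_timeFactor S (ht.trans hT'))
    (lt_min (sub_pos.2 ht) (sub_pos.2 hx)) (fun s y hD hsy => ?_) hjet
  obtain ⟨h1, h2⟩ := lt_min_iff.1 hsy
  have h3 := abs_nonneg (s - t)
  have h4 := abs_nonneg (y - x)
  have h5 := le_abs_self (s - t)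
  have h6 : |y| ≤ R := by
    have : |y| ≤ |y - x| + |x| := by simpa using abs_add_le (y - x) x
    linarith
  exact ⟨⟨hD.1.1.le, by linarith⟩, abs_le.1 h6⟩

/-- The second-order parts of the two jets at nearby points cannot balance the strictness `c'`. -/
lemma false_of_jets {α L c' r η₀ a₁ a₂ X₁ X₂ s₁ s₂ s d : ℝ} (hα : 0 < α) (hc' : 0 < c')
    (hr : r ≤ c' / 2) (hη : η₀ ≤ c' / (48 * (L ^ 2 + 1))) (ha : |a₁ + a₂| ≤ r)
    (hX : ∀ c d : ℝ, X₁ * c ^ 2 + X₂ * d ^ 2 ≤ 2 * α * (c - d) ^ 2)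
    (h₁ : a₁ + c' ≤ s₁ ^ 2 / 2 * X₁) (h₂ : a₂ + c' ≤ s₂ ^ 2 / 2 * X₂)
    (hs₁ : |s₁ - s| ≤ L * |d|) (hs₂ : 2 * α * |s - s₂| ^ 2 ≤ c' / 4)
    (hd : α * d ^ 2 ≤ 12 * η₀) : False := by
  have e1 := hX s₁ s₂
  have e2 : (s₁ - s) ^ 2 ≤ L ^ 2 * d ^ 2 := by
    rw [← sq_abs, ← sq_abs d, ← mul_pow]; exact pow_le_pow_left₀ (abs_nonneg _) hs₁ 2
  rw [sq_abs] at hs₂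
  have e3 : (s₁ - s₂) ^ 2 ≤ 2 * (s₁ - s) ^ 2 + 2 * (s - s₂) ^ 2 := by
    nlinarith [sq_nonneg ((s₁ - s) - (s - s₂))]
  have e4 : η₀ * (48 * (L ^ 2 + 1)) ≤ c' := (le_div_iff₀ (by positivity)).1 hη
  have e5 := mul_le_mul_of_nonneg_left e3 hα.le
  have e6 := mul_le_mul_of_nonneg_left e2 hα.le
  have e7 := mul_le_mul_of_nonneg_left hd (sq_nonneg L)
  have e8 : 0 ≤ η₀ := by nlinarith [mul_nonneg hα.le (sq_nonneg d)]
  have e9 := (abs_le.1 ha).1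
  nlinarith

set_option maxHeartbeats 400000 in
theorem stmt_17 (T δ c₀ C L : ℝ) (hT : 0 < T) (hδ0 : 0 < δ) (hδ1 : δ ≤ 1)
    (h : ℝ → ℝ) (hhcont : Continuous h) (hc₀ : 0 < c₀)
    (hhgrowth : ∀ x : ℝ, |h x| ≤ c₀ * (1 + |x|))
    (σ : ℝ × ℝ → ℝ) (hσcont : ContinuousOn σ (Set.Icc 0 T ×ˢ Set.univ))
    (hσLip : ∀ t ∈ Set.Icc (0 : ℝ) T, ∀ x y : ℝ, |σ (t, x) - σ (t, y)| ≤ L * |x - y|)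
    (u v : ℝ × ℝ → ℝ)
    (husc : UpperSemicontinuousOn u (Set.Ico 0 T ×ˢ Set.univ))
    (hlsc : LowerSemicontinuousOn v (Set.Ico 0 T ×ˢ Set.univ))
    -- u is a viscosity subsolution of the obstacle problem on (0,T) × ℝ
    (husub : ∀ t x : ℝ, (t, x) ∈ Set.Ioo 0 T ×ˢ (Set.univ : Set ℝ) → ∀ a p m : ℝ,
      ParabolicSuperjet (Set.Ioo 0 T ×ˢ Set.univ) u t x a p m →
        min (u (t, x) - h x) (a - σ (t, x) ^ 2 / 2 * m) ≤ 0)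
    -- v is a viscosity supersolution of the obstacle problem on (0,T) × ℝ
    (hvsuper : ∀ t x : ℝ, (t, x) ∈ Set.Ioo 0 T ×ˢ (Set.univ : Set ℝ) → ∀ a p m : ℝ,
      ParabolicSubjet (Set.Ioo 0 T ×ˢ Set.univ) v t x a p m →
        min (v (t, x) - h x) (a - σ (t, x) ^ 2 / 2 * m) ≥ 0)
    -- linear growth
    (hC : 0 < C)
    (hugrow : ∀ t x : ℝ, 0 ≤ t → t < T → u (t, x) ≤ C * (1 + |x|))
    (hvgrow : ∀ t x : ℝ, 0 ≤ t → t < T → -v (t, x) ≤ C * (1 + |x|))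
    -- δ-Hölder continuity of the initial data
    (Ku Kv : ℝ)
    (huHol : ∀ x y : ℝ, |u (0, x) - u (0, y)| ≤ Ku * |x - y| ^ δ)
    (hvHol : ∀ x y : ℝ, |v (0, x) - v (0, y)| ≤ Kv * |x - y| ^ δ)
    -- comparison at time 0
    (h0 : ∀ x : ℝ, u (0, x) ≤ v (0, x)) :
    ∀ t x : ℝ, 0 ≤ t → t < T → u (t, x) ≤ v (t, x) := by
  by_contra! hcon
  obtain ⟨t₀, x₀, ht₀, ht₀T, hlt⟩ := hcon
  obtain ⟨S, hS, hσS⟩ := sq_le_of_lipschitz hσcont hσLip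
  have hG₀ : 0 < timeFactor S T t₀ :=
    (one_div_pos.2 (sub_pos.2 ht₀T)).trans_le (one_div_le_timeFactor hS ht₀ ht₀T)
  have hd₀ : 0 < u (t₀, x₀) - v (t₀, x₀) := sub_pos.2 hlt
  obtain ⟨κ, hκ, hκ₀⟩ : ∃ κ > 0,
      2 * (κ * (1 + x₀ ^ 2) * timeFactor S T t₀) < u (t₀, x₀) - v (t₀, x₀) := by
    refine ⟨(u (t₀, x₀) - v (t₀, x₀)) / (4 * ((1 + x₀ ^ 2) * timeFactor S T t₀)), by positivity, ?_⟩
    have : 2 * ((u (t₀, x₀) - v (t₀, x₀)) / (4 * ((1 + x₀ ^ 2) * timeFactor S T t₀))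
        * (1 + x₀ ^ 2) * timeFactor S T t₀) = (u (t₀, x₀) - v (t₀, x₀)) / 2 := by
      field_simp
      ring
    linarith
  obtain ⟨B, R, T', hB, hR, hT'0, hT', hloc⟩ := exists_localisation hκ hS hT hC
  set Q : Set (ℝ × ℝ) := Set.Icc 0 T' ×ˢ Set.Icc (-R) R with hQdef
  have hQ : IsCompact Q := isCompact_Icc.prod isCompact_Icc
  set g₁ : ℝ × ℝ → ℝ := fun z => u z - κ * (1 + z.2 ^ 2) * timeFactor S T z.1 with hg₁def
  set g₂ : ℝ × ℝ → ℝ := fun z => -v z - κ * (1 + z.2 ^ 2) * timeFactor S T z.1 with hg₂def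
  have hg₁ : UpperSemicontinuousOn g₁ Q := usc_penalised hT' husc
  have hg₂ : UpperSemicontinuousOn g₂ Q := usc_penalised (w := fun z => -v z) hT' hlsc.neg
  have hloc₁ : ∀ z : ℝ × ℝ, 0 ≤ z.1 → z.1 < T →
      g₁ z ≤ B ∧ (T' ≤ z.1 ∨ R ≤ |z.2| → g₁ z ≤ -B) := fun z h1 h2 =>
    hloc z.1 z.2 (u z) h1 h2 (hugrow z.1 z.2 h1 h2)
  have hloc₂ : ∀ z : ℝ × ℝ, 0 ≤ z.1 → z.1 < T →
      g₂ z ≤ B ∧ (T' ≤ z.1 ∨ R ≤ |z.2| → g₂ z ≤ -B) := fun z h1 h2 =>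
    hloc z.1 z.2 (-v z) h1 h2 (hvgrow z.1 z.2 h1 h2)
  have hpen : ∀ z : ℝ × ℝ, 0 ≤ z.1 → z.1 < T → 0 ≤ κ * (1 + z.2 ^ 2) * timeFactor S T z.1 := by
    intro z h1 h2
    have := (one_div_pos.2 (sub_pos.2 h2)).le.trans (one_div_le_timeFactor hS h1 h2)
    positivity
  have hQT : ∀ z ∈ Q, 0 ≤ z.1 ∧ z.1 < T := fun z hz => ⟨hz.1.1, hz.1.2.trans_lt hT'⟩
  have hz₀pos : 0 < g₁ (t₀, x₀) + g₂ (t₀, x₀) := by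
    simp only [hg₁def, hg₂def]
    linarith
  have hz₀ : (t₀, x₀) ∈ Q := by
    have h1 := hloc₁ (t₀, x₀) ht₀ ht₀T
    have h2 := hloc₂ (t₀, x₀) ht₀ ht₀T
    by_contra hn
    have : T' ≤ t₀ ∨ R ≤ |x₀| := by
      by_contra! hm
      exact hn ⟨⟨ht₀, hm.1.le⟩, abs_le.1 hm.2.le⟩
    linarith [h1.2 this, h2.1]
  obtain ⟨zm, hzm, hmax⟩ := (hg₁.add hg₂).exists_isMaxOn ⟨_, hz₀⟩ hQ
  obtain ⟨M, hM⟩ : ∃ M, M = g₁ zm + g₂ zm := ⟨_, rfl⟩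
  have hmax' : ∀ z ∈ Q, g₁ z + g₂ z ≤ M := fun z hz => hM ▸ hmax hz
  have hM0 : 0 < M := hz₀pos.trans_le (hmax' _ hz₀)
  set c' := κ / T ^ 2 with hc'def
  have hc' : 0 < c' := by positivity
  obtain ⟨η₀, hη0, hηM, hηc⟩ : ∃ η₀ > 0, η₀ ≤ M / 2 ∧ η₀ ≤ c' / (48 * (L ^ 2 + 1)) :=
    ⟨min (M / 2) (c' / (48 * (L ^ 2 + 1))), by positivity, min_le_left _ _, min_le_right _ _⟩
  -- the sum of the penalised functions as a function of two points
  set g : (ℝ × ℝ) × (ℝ × ℝ) → ℝ := fun w => g₁ w.1 + g₂ w.2 with hgdef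
  have hg : UpperSemicontinuousOn g (Q ×ˢ Q) :=
    (hg₁.comp continuous_fst.continuousOn fun w hw => hw.1).add
      (hg₂.comp continuous_snd.continuousOn fun w hw => hw.2)
  have hinit : ∀ z ∈ Q, z.1 = 0 → g (z, z) < M / 2 := by
    rintro ⟨t, x⟩ hz rfl
    have h1 := hpen _ (hQT _ hz).1 (hQT _ hz).2
    have h2 := h0 x
    simp only [hgdef, hg₁def, hg₂def]
    simp only at h1
    linarith
  have hclosed₁ : IsClosed {w : (ℝ × ℝ) × (ℝ × ℝ) | w.1.1 = 0} :=
    isClosed_eq (by fun_prop) continuous_const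
  have hclosed₂ : IsClosed {w : (ℝ × ℝ) × (ℝ × ℝ) | w.2.1 = 0} :=
    isClosed_eq (by fun_prop) continuous_const
  obtain ⟨ra, hra, hga⟩ := exists_lt_near_diagonal (hQ.prod hQ) hg (c := M + η₀)
    fun z hz => (hmax' z hz.1).trans_lt (by linarith)
  obtain ⟨rb, hrb, hgb⟩ := exists_lt_near_diagonal ((hQ.prod hQ).inter_right hclosed₁)
    (hg.mono Set.inter_subset_left) (c := M / 2) fun z hz => hinit z hz.1.1 hz.2
  obtain ⟨rc, hrc, hgc⟩ := exists_lt_near_diagonal ((hQ.prod hQ).inter_right hclosed₂)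
    (hg.mono Set.inter_subset_left) (c := M / 2) fun z hz => hinit z hz.1.1 hz.2
  obtain ⟨rd, hrd, hhd⟩ := Metric.uniformContinuousOn_iff.1
    ((isCompact_Icc (a := -R) (b := R)).uniformContinuousOn_of_continuous hhcont.continuousOn)
    (M / 2) (by positivity)
  obtain ⟨r₀, hr₀, hr₀a, hr₀b, hr₀c, hr₀d⟩ :
      ∃ r₀ > 0, r₀ ≤ ra ∧ r₀ ≤ rb ∧ r₀ ≤ rc ∧ r₀ ≤ rd :=
    ⟨min (min ra rb) (min rc rd), by positivity, by simp, by simp, by simp, by simp⟩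
  set P₀ := 4 * B + 2 * η₀ with hP₀def
  have hP₀ : 0 < P₀ := by positivity
  set α := 3 * P₀ / r₀ ^ 2 + 1 with hαdef
  have hα1 : 1 ≤ α := by rw [hαdef]; linarith [show 0 ≤ 3 * P₀ / r₀ ^ 2 by positivity]
  have hα : 0 < α := by linarith
  -- the time weight is chosen after the space weight, to absorb the modulus of `σ` in time
  have hσQ : ContinuousOn σ Q :=
    hσcont.mono fun z hz => ⟨⟨hz.1.1, (hQT z hz).2.le⟩, Set.mem_univ _⟩
  obtain ⟨e, he, hee⟩ : ∃ e > 0, 2 * α * e ^ 2 ≤ c' / 4 := by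
    refine ⟨min 1 (c' / (8 * α)), by positivity, ?_⟩
    have h1 : min 1 (c' / (8 * α)) ≤ 1 := min_le_left _ _
    have h2 : min 1 (c' / (8 * α)) * (8 * α) ≤ c' :=
      (le_div_iff₀ (by positivity)).1 (min_le_right _ _)
    have h3 : 0 < min 1 (c' / (8 * α)) := by positivity
    have h4 := mul_le_mul_of_nonneg_right h1 h3.le
    nlinarith
  obtain ⟨re, hre, hσe⟩ := Metric.uniformContinuousOn_iff.1
    (hQ.uniformContinuousOn_of_continuous hσQ) e he
  set r₁ := min r₀ re with hr₁def
  have hr₁ : 0 < r₁ := by positivity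
  set β := 3 * P₀ / r₁ ^ 2 + 1 with hβdef
  have hβ1 : 1 ≤ β := by rw [hβdef]; linarith [show 0 ≤ 3 * P₀ / r₁ ^ 2 by positivity]
  have hβ : 0 < β := by linarith
  obtain ⟨D₀, hD₀⟩ := hQ.isBounded.exists_norm_le
  obtain ⟨D, hD0, hD⟩ : ∃ D, 0 ≤ D ∧ ∀ z ∈ Q, ‖z‖ ≤ D :=
    ⟨D₀, (norm_nonneg _).trans (hD₀ _ hz₀), hD₀⟩
  obtain ⟨r, hr, hr2, hrD, hrc'⟩ : ∃ r > 0, r ≤ 1 / 2 ∧ r * (3 * D + 2) ≤ η₀ ∧ r ≤ c' / 2 := by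
    refine ⟨min (1 / 2) (min (η₀ / (3 * D + 2)) (c' / 2)), by positivity, min_le_left _ _, ?_,
      (min_le_right _ _).trans (min_le_right _ _)⟩
    exact (le_div_iff₀ (by positivity)).1 ((min_le_right _ _).trans (min_le_left _ _))
  obtain ⟨z₁, hz₁, z₂, hz₂, ξ, η, a₁, b₁, X₁, a₂, b₂, X₂, hnear, ha, hX, hJ₁, hJ₂⟩ :=
    exists_superjets hα hβ hr hQ ⟨_, hz₀⟩ hg₁ hg₂
  have hP := hnear zm hzm
  have hξ := norm_le_of_supKernel hα1 hβ1 (ξ := ξ) (hD z₁ hz₁)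
  have hη := norm_le_of_supKernel hα1 hβ1 (ξ := η) (hD z₂ hz₂)
  have hk₁ := supKernel_nonneg hα.le hβ.le (ξ - z₁)
  have hk₂ := supKernel_nonneg hα.le hβ.le (η - z₂)
  have hk₃ := coupling_nonneg hα.le hβ.le (ξ, η)
  obtain ⟨hdt, hdx⟩ := distances_le_penalty hα.le hβ.le z₁ z₂ ξ η
  set P := supKernel α β (ξ - z₁) + supKernel α β (η - z₂) + coupling α β (ξ, η) with hPdef
  have hP0 : 0 ≤ P := by positivity
  have hval : M + P / 2 - η₀ ≤ g₁ z₁ + g₂ z₂ := by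
    have h1 : ‖zm‖ + ‖ξ‖ + ‖η‖ ≤ 3 * D + 2 + P := by linarith [hD zm hzm]
    have h2 := mul_le_mul_of_nonneg_left h1 hr.le
    have h3 := mul_le_mul_of_nonneg_right hr2 hP0
    rw [← hM] at hP
    linarith
  have hP₀le : P ≤ P₀ := by
    have h1 := (hloc₁ z₁ (hQT _ hz₁).1 (hQT _ hz₁).2).1
    have h2 := (hloc₂ z₂ (hQT _ hz₂).1 (hQT _ hz₂).2).1
    linarith
  -- with `P ≤ P₀` the choice of the weights brings the two points close to each other
  have hdt' : |z₁.1 - z₂.1| < r₁ :=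
    abs_lt_of_weight hr₁ (by positivity) hβdef.ge (hdt.trans (by linarith))
  have hdx' : |z₁.2 - z₂.2| < r₀ :=
    abs_lt_of_weight hr₀ (by positivity) hαdef.ge (hdx.trans (by linarith))
  have hdist : dist z₁ z₂ < r₀ :=
    max_lt (hdt'.trans_le (min_le_left _ _)) hdx'
  have hlow : M / 2 ≤ g (z₁, z₂) := by
    simp only [hgdef]
    linarith
  have hup : g (z₁, z₂) < M + η₀ := hga (z₁, z₂) ⟨hz₁, hz₂⟩ (hdist.trans_le hr₀a)
  -- the penalty is small because the supremum near the diagonal hardly exceeds `M`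
  have hP4 : P ≤ 4 * η₀ := by
    simp only [hgdef] at hup
    linarith
  -- near the initial time the sum would be below `M / 2`
  have ht₁ : 0 < z₁.1 := by
    refine (hQT _ hz₁).1.lt_of_ne fun h1 => ?_
    exact absurd (hgb (z₁, z₂) ⟨⟨hz₁, hz₂⟩, h1.symm⟩ (hdist.trans_le hr₀b)) (not_lt.2 hlow)
  have ht₂ : 0 < z₂.1 := by
    refine (hQT _ hz₂).1.lt_of_ne fun h1 => ?_
    exact absurd (hgc (z₁, z₂) ⟨⟨hz₁, hz₂⟩, h1.symm⟩ (hdist.trans_le hr₀c)) (not_lt.2 hlow)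
  simp only [hgdef] at hlow
  have hb₁ := hloc₁ z₁ (hQT _ hz₁).1 (hQT _ hz₁).2
  have hb₂ := hloc₂ z₂ (hQT _ hz₂).1 (hQT _ hz₂).2
  have hin₁ : z₁.1 < T' ∧ |z₁.2| < R := by
    by_contra hn
    rw [not_and_or, not_lt, not_lt] at hn
    linarith [hb₁.2 hn, hb₂.1]
  have hin₂ : z₂.1 < T' ∧ |z₂.2| < R := by
    by_contra hn
    rw [not_and_or, not_lt, not_lt] at hn
    linarith [hb₂.2 hn, hb₁.1]
  have hJu := superjet_of_penalised hκ hT' hin₁.1 hin₁.2 hJ₁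
  have hJv := subjet_of_superjet_neg
    (superjet_of_penalised (w := fun z => -v z) hκ hT' hin₂.1 hin₂.2 hJ₂)
  have hsup := le_min_iff.1
    (hvsuper z₂.1 z₂.2 ⟨⟨ht₂, (hQT _ hz₂).2⟩, Set.mem_univ _⟩ _ _ _ hJv)
  have hsub := husub z₁.1 z₁.2 ⟨⟨ht₁, (hQT _ hz₁).2⟩, Set.mem_univ _⟩ _ _ _ hJu
  -- the obstacle is inactive for `u` at `z₁`, since `v` lies above it at `z₂`
  have hpos : 0 < u (z₁.1, z₁.2) - h z₁.2 := by
    have h1 := hhd z₁.2 hz₁.2 z₂.2 hz₂.2 (hdx'.trans_le hr₀d)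
    rw [Real.dist_eq] at h1
    have h2 := hpen z₁ (hQT _ hz₁).1 (hQT _ hz₁).2
    have h3 := hpen z₂ (hQT _ hz₂).1 (hQT _ hz₂).2
    have h4 := hsup.1
    have h5 := (abs_lt.1 h1).2
    simp only [hg₁def, hg₂def] at hlow
    simp only [Prod.mk.eta] at h4 ⊢
    linarith
  have hsub' := (min_le_iff.1 hsub).resolve_left (not_le.2 hpos)
  have hcl₁ : z₁.1 ∈ Set.Icc 0 T := ⟨ht₁.le, (hQT _ hz₁).2.le⟩
  have hcl₂ : z₂.1 ∈ Set.Icc 0 T := ⟨ht₂.le, (hQT _ hz₂).2.le⟩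
  have hst₁ := strict_of_penalised hκ hS ht₁.le (hQT _ hz₁).2 (hσS _ hcl₁ z₁.2) hsub'
  have hst₂ := strict_of_penalised (a := a₂) (X := X₂) hκ hS ht₂.le (hQT _ hz₂).2
    (hσS _ hcl₂ z₂.2) (by linarith [hsup.2])
  -- `σ` is compared at `z₁` and `z₂` through the intermediate point `(z₁.1, z₂.2)`
  refine false_of_jets hα hc' hrc' hηc ha hX hst₁ hst₂ (s := σ (z₁.1, z₂.2))
    (hσLip _ hcl₁ z₁.2 z₂.2) ?_ (hdx.trans (by linarith))
  have hdσ := hσe (z₁.1, z₂.2) ⟨hz₁.1, hz₂.2⟩ z₂ hz₂ (by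
    simpa [Prod.dist_eq, Real.dist_eq, hre] using hdt'.trans_le (min_le_right _ _))
  rw [Real.dist_eq] at hdσ
  refine le_trans ?_ hee
  gcongr
end
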